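/- arXiv:1901.07397 — 2 statements merged into one kernel-verified Lean document; each statement's English description precedes it below -/
import Mathlib

section
/- Let λ, σ, τ > 0 be real, p, q complex with Re(p) ≥ 0, Re(q) ≥ 0, and η₁, η₂ complex with Re(η₁) > 0, Re(η₂) > 0. Then the extended beta function satisfies the functional relation B_{p,q}^{λ;σ,τ}(η₁+1, η₂) + B_{p,q}^{λ;σ,τ}(η₁, η₂+1) = B_{p,q}^{λ;σ,τ}(η₁, η₂). -/
open MeasureTheory Set Complex

/-- The classical Mittag-Leffler function `E_λ(x) = Σ xⁿ / Γ(λn+1)`. -/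
noncomputable def mlE (lam : ℝ) (x : ℂ) : ℂ :=
  ∑' n : ℕ, x ^ n / Complex.Gamma (lam * n + 1)

/-- The extended beta function
`B_{p,q}^{λ;σ,τ}(η₁,η₂) = ∫₀¹ t^{η₁-1}(1-t)^{η₂-1} E_λ(-p/t^σ) E_λ(-q/(1-t)^τ) dt`. -/
noncomputable def extBeta (lam sig tau : ℝ) (p q e1 e2 : ℂ) : ℂ :=
  ∫ t in Ioo (0:ℝ) 1,
    (t : ℂ) ^ (e1 - 1) * (1 - (t : ℂ)) ^ (e2 - 1) *
      mlE lam (-p / (t : ℂ) ^ (sig : ℂ)) * mlE lam (-q / (1 - (t : ℂ)) ^ (tau : ℂ))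


namespace ExtBetaAux

lemma gamma_lower (R x : ℝ) (hR : 0 < R) (hx : 0 ≤ x) :
    R ^ x * Real.exp (-R) ≤ Real.Gamma (x + 1) := by
  rw [Real.Gamma_eq_integral (by linarith)]
  have h1 : IntegrableOn (fun u : ℝ => Real.exp (-u) * u ^ (x + 1 - 1)) (Ioi 0) :=
    Real.GammaIntegral_convergent (by linarith)
  have h2 : ∫ u in Ioi R, Real.exp (-u) * R ^ x ≤
      ∫ u in Ioi R, Real.exp (-u) * u ^ (x + 1 - 1) := by
    apply setIntegral_mono_on
    · exact (integrableOn_exp_neg_Ioi R).mul_const _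
    · exact h1.mono_set (Ioi_subset_Ioi hR.le)
    · exact measurableSet_Ioi
    · intro u hu
      simp only [add_sub_cancel_right]
      have : R ≤ u := le_of_lt hu
      gcongr
  have h3 : ∫ u in Ioi R, Real.exp (-u) * u ^ (x + 1 - 1) ≤
      ∫ u in Ioi 0, Real.exp (-u) * u ^ (x + 1 - 1) := by
    apply setIntegral_mono_set h1
    · filter_upwards [ae_restrict_mem measurableSet_Ioi] with u hu
      have : (0:ℝ) < u := hu
      simp only [Pi.zero_apply]
      positivity
    · exact (Ioi_subset_Ioi hR.le).eventuallyLE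
  rw [integral_mul_const, integral_exp_neg_Ioi] at h2
  linarith

lemma gamma_pos (lam : ℝ) (hlam : 0 < lam) (n : ℕ) : 0 < Real.Gamma (lam * n + 1) :=
  Real.Gamma_pos_of_pos (by positivity)

lemma summable_real (lam : ℝ) (hlam : 0 < lam) (r : ℝ) (hr : 0 ≤ r) :
    Summable (fun n : ℕ => r ^ n / Real.Gamma (lam * n + 1)) := by
  set R : ℝ := (2 * r + 1) ^ (1 / lam) with hR
  have hR0 : 0 < R := by positivity
  have hRl : R ^ lam = 2 * r + 1 := by
    rw [hR, ← Real.rpow_mul (by positivity)]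
    field_simp
    simp
  have hs : Summable (fun n : ℕ => Real.exp R * (r / (2 * r + 1)) ^ n) := by
    apply Summable.mul_left
    apply summable_geometric_of_lt_one (by positivity)
    rw [div_lt_one (by positivity)]; linarith
  refine Summable.of_nonneg_of_le (fun n => ?_) (fun n => ?_) hs
  · have := gamma_pos lam hlam n
    positivity
  · have h := gamma_lower R (lam * n) hR0 (by positivity)
    rw [Real.rpow_mul hR0.le, hRl, Real.rpow_natCast] at h
    rw [div_le_iff₀ (gamma_pos lam hlam n)]
    calc r ^ n = Real.exp R * (r / (2 * r + 1)) ^ n * ((2 * r + 1) ^ n * Real.exp (-R)) := by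
          rw [div_pow, Real.exp_neg]
          field_simp
      _ ≤ _ := by gcongr

lemma norm_term (lam : ℝ) (hlam : 0 < lam) (x : ℂ) (n : ℕ) :
    ‖x ^ n / Complex.Gamma (lam * n + 1)‖ = ‖x‖ ^ n / Real.Gamma (lam * n + 1) := by
  have : ((lam : ℂ) * n + 1) = ((lam * n + 1 : ℝ) : ℂ) := by push_cast; rfl
  rw [this, Complex.Gamma_ofReal, norm_div, norm_pow, Complex.norm_real,
    Real.norm_of_nonneg (gamma_pos lam hlam n).le]

lemma differentiable_mlE (lam : ℝ) (hlam : 0 < lam) : Differentiable ℂ (mlE lam) := by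
  intro z
  have : DifferentiableOn ℂ (mlE lam) (Metric.ball 0 (‖z‖ + 1)) := by
    apply differentiableOn_tsum_of_summable_norm
      (summable_real lam hlam (‖z‖ + 1) (by positivity))
    · intro i
      fun_prop
    · exact Metric.isOpen_ball
    · intro i w hw
      rw [norm_term lam hlam]
      have := gamma_pos lam hlam i
      have hw' : ‖w‖ ≤ ‖z‖ + 1 := by simpa using (le_of_lt hw : dist w 0 ≤ _)
      gcongr
  exact (this z (by simp)).differentiableAt (Metric.isOpen_ball.mem_nhds (by simp))

lemma mlE_zero (lam : ℝ) : mlE lam 0 = 1 := by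
  unfold mlE
  rw [tsum_eq_single 0]
  · simp
  · intro n hn
    simp [hn]

/-- The rescaled Mittag-Leffler function `G(u) = E(c u^lam)` -/
noncomputable def G (lam : ℝ) (c : ℂ) (u : ℝ) : ℂ := mlE lam (c * ((u ^ lam : ℝ) : ℂ))

lemma continuous_G (lam : ℝ) (hlam : 0 < lam) (c : ℂ) : Continuous (G lam c) := by
  unfold G
  refine (differentiable_mlE lam hlam).continuous.comp ?_
  have := Real.continuous_rpow_const hlam.le
  fun_prop

lemma G_zero (lam : ℝ) (hlam : 0 < lam) (c : ℂ) : G lam c 0 = 1 := by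
  simp [G, Real.zero_rpow hlam.ne', mlE_zero]

lemma laplace_real (lam : ℝ) (hlam : 0 < lam) (c : ℂ) (x : ℝ) (hx : 0 < x)
    (hxc : ‖c‖ < x ^ lam) :
    (∫ u in Ioi (0:ℝ), Complex.exp (-(x * u)) * G lam c u) * ((x : ℂ) ^ (lam : ℂ) - c)
      = (x : ℂ) ^ ((lam : ℂ) - 1) := by
  let F : ℕ → ℝ → ℂ := fun n u =>
    (c ^ n / Complex.Gamma (lam * n + 1)) * ((u : ℂ) ^ ((lam * n + 1 : ℂ) - 1) * Complex.exp (-(x * u)))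
  have hnorm : ∀ n : ℕ, ∀ u ∈ Ioi (0:ℝ), ‖F n u‖ =
      (‖c‖ ^ n / Real.Gamma (lam * n + 1)) * (u ^ ((lam * n + 1) - 1) * Real.exp (-(x * u))) := by
    intro n u hu
    simp only [F]
    rw [norm_mul, norm_term lam hlam, norm_mul, Complex.norm_exp,
      Complex.norm_cpow_eq_rpow_re_of_pos hu]
    simp
  have hxl : (0:ℝ) < x ^ lam := by positivity
  have hintF : ∀ n : ℕ, ∫ u in Ioi (0:ℝ), F n u = (1 / (x:ℂ)) * (c / (x:ℂ) ^ (lam:ℂ)) ^ n := by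
    intro n
    simp only [F]
    rw [integral_const_mul, Complex.integral_cpow_mul_exp_neg_mul_Ioi _ hx]
    · have hg : Complex.Gamma (lam * n + 1) ≠ 0 := by
        apply Complex.Gamma_ne_zero_of_re_pos
        simp; positivity
      have hx' : (x:ℂ) ≠ 0 := by exact_mod_cast hx.ne'
      rw [Complex.cpow_add _ _ (by simpa using hx'), Complex.cpow_one, one_div,
        ← Complex.ofReal_inv, ← Complex.ofReal_natCast, ← Complex.ofReal_mul,
        ← Complex.ofReal_cpow (by positivity), ← Complex.ofReal_cpow hx.le,
        Real.rpow_mul (by positivity), Real.rpow_natCast, Real.inv_rpow hx.le]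
      push_cast at hg ⊢
      rw [div_pow, inv_pow]
      field_simp
    · simp; positivity
  have hintn : ∀ n : ℕ, ∫ u in Ioi (0:ℝ), ‖F n u‖ = (1 / x) * (‖c‖ / x ^ lam) ^ n := by
    intro n
    rw [setIntegral_congr_fun measurableSet_Ioi (hnorm n), integral_const_mul,
      Real.integral_rpow_mul_exp_neg_mul_Ioi (by positivity) hx]
    have := gamma_pos lam hlam n
    rw [Real.rpow_add (by positivity), Real.rpow_one, Real.rpow_mul (by positivity),
      Real.rpow_natCast, one_div, Real.inv_rpow hx.le, div_pow, inv_pow]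
    field_simp
  have hI : ∀ n : ℕ, Integrable (F n) (volume.restrict (Ioi 0)) := by
    intro n
    by_contra hcon
    have hz : ∫ u in Ioi (0:ℝ), (u ^ ((lam * n + 1) - 1) * Real.exp (-(x * u))) = 0 := by
      apply integral_undef
      intro hi
      apply hcon
      have hm : AEStronglyMeasurable (F n) (volume.restrict (Ioi 0)) := by
        apply Measurable.aestronglyMeasurable
        fun_prop
      refine Integrable.mono' (hi.const_mul (‖c‖ ^ n / Real.Gamma (lam * n + 1))) hm ?_
      filter_upwards [ae_restrict_mem measurableSet_Ioi] with u hu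
      rw [hnorm n u hu]
    rw [Real.integral_rpow_mul_exp_neg_mul_Ioi (by positivity) hx] at hz
    have := gamma_pos lam hlam n
    have h2 : 0 < (1 / x) ^ (lam * n + 1) * Real.Gamma (lam * n + 1) := by positivity
    linarith
  have hS : Summable fun n => ∫ u in Ioi (0:ℝ), ‖F n u‖ := by
    simp_rw [hintn]
    apply Summable.mul_left
    apply summable_geometric_of_lt_one (by positivity)
    rwa [div_lt_one hxl]
  have h := hasSum_integral_of_summable_integral_norm hI hS
  have hG : ∀ u ∈ Ioi (0:ℝ), ∑' n, F n u = Complex.exp (-(x * u)) * G lam c u := by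
    intro u hu
    have hu' : (0:ℝ) < u := hu
    unfold G mlE
    rw [← tsum_mul_left]
    congr 1
    ext n
    simp only [F]
    rw [add_sub_cancel_right, ← Complex.ofReal_natCast, ← Complex.ofReal_mul,
      ← Complex.ofReal_cpow hu'.le, Real.rpow_mul hu'.le, Real.rpow_natCast, mul_pow]
    push_cast
    ring
  rw [setIntegral_congr_fun measurableSet_Ioi hG] at h
  simp_rw [hintF] at h
  have hxc' : ((x:ℂ) ^ (lam:ℂ)) = ((x ^ lam : ℝ) : ℂ) := by
    rw [Complex.ofReal_cpow hx.le]
  have hn : ‖(x:ℂ) ^ (lam:ℂ)‖ = x ^ lam := by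
    rw [hxc', Complex.norm_real, Real.norm_of_nonneg hxl.le]
  have hlt : ‖c / (x:ℂ) ^ (lam:ℂ)‖ < 1 := by
    rw [norm_div, hn, div_lt_one hxl]; exact hxc
  have h' := (hasSum_geometric_of_norm_lt_one hlt).mul_left (1 / (x:ℂ))
  rw [h.unique h']
  have hx' : (x:ℂ) ≠ 0 := by exact_mod_cast hx.ne'
  have hxl' : (x:ℂ) ^ (lam:ℂ) ≠ 0 := by
    rw [hxc']; exact_mod_cast hxl.ne'
  have hd : (x:ℂ) ^ (lam:ℂ) - c ≠ 0 := by
    intro h0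
    rw [sub_eq_zero] at h0
    rw [← hn, h0] at hxc
    exact lt_irrefl _ hxc
  rw [Complex.cpow_sub _ _ hx', Complex.cpow_one]
  have : 1 - c / (x:ℂ) ^ (lam:ℂ) = ((x:ℂ) ^ (lam:ℂ) - c) / (x:ℂ) ^ (lam:ℂ) := by
    field_simp
  rw [this]
  field_simp

/-- Subexponential growth in the mean. -/
def Sub (lam : ℝ) (c : ℂ) : Prop :=
  ∀ δ : ℝ, 0 < δ → IntegrableOn (fun u : ℝ => Real.exp (-(δ * u)) * ‖G lam c u‖) (Ioi 0)

lemma norm_exp_mul (s : ℂ) (u : ℝ) : ‖Complex.exp (-(s * u))‖ = Real.exp (-(s.re * u)) := by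
  rw [Complex.norm_exp]; simp

lemma Sub.integrable {lam : ℝ} {c : ℂ} (hlam : 0 < lam) (h : Sub lam c) (s : ℂ) (hs : 0 < s.re) :
    IntegrableOn (fun u : ℝ => Complex.exp (-(s * u)) * G lam c u) (Ioi 0) := by
  refine Integrable.mono' (h s.re hs) ?_ ?_
  · have := continuous_G lam hlam c
    apply Continuous.aestronglyMeasurable
    fun_prop
  · refine Filter.Eventually.of_forall (fun u => ?_)
    rw [norm_mul, norm_exp_mul]

lemma Sub.differentiableOn {lam : ℝ} {c : ℂ} (hlam : 0 < lam) (h : Sub lam c) :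
    DifferentiableOn ℂ (fun s : ℂ => ∫ u in Ioi (0:ℝ), Complex.exp (-(s * u)) * G lam c u)
      {s : ℂ | 0 < s.re} := by
  intro s₀ hs₀
  have hs₀' : 0 < s₀.re := hs₀
  have hG := continuous_G lam hlam c
  set δ := s₀.re / 2 with hδ
  have hδ0 : 0 < δ := by positivity
  refine (hasDerivAt_integral_of_dominated_loc_of_deriv_le
    (F := fun (s : ℂ) (u : ℝ) => Complex.exp (-(s * u)) * G lam c u)
    (F' := fun (s : ℂ) (u : ℝ) => (Complex.exp (-(s * u)) * (-u)) * G lam c u)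
    (s := {s : ℂ | δ < s.re})
    (bound := fun u => (2 / δ) * (Real.exp (-((δ / 2) * u)) * ‖G lam c u‖))
    ?_ ?_ ?_ ?_ ?_ ?_ ?_).2.differentiableAt.differentiableWithinAt
  · apply (isOpen_lt continuous_const Complex.continuous_re).mem_nhds
    change δ < s₀.re; linarith
  · refine Filter.Eventually.of_forall (fun s => ?_)
    apply Continuous.aestronglyMeasurable
    fun_prop
  · exact h.integrable hlam s₀ hs₀'
  · apply Continuous.aestronglyMeasurable
    fun_prop
  · filter_upwards [ae_restrict_mem measurableSet_Ioi] with u hu s hs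
    have hu' : (0:ℝ) < u := hu
    have hs' : δ < s.re := hs
    rw [norm_mul, norm_mul, norm_exp_mul, ← mul_assoc]
    refine mul_le_mul_of_nonneg_right ?_ (norm_nonneg _)
    rw [norm_neg, Complex.norm_real, Real.norm_of_nonneg hu'.le]
    have h1 : Real.exp (-(s.re * u)) ≤ Real.exp (-(δ / 2 * u)) * Real.exp (-(δ / 2 * u)) := by
      rw [← Real.exp_add]
      apply Real.exp_le_exp.mpr
      nlinarith
    have h2 : Real.exp (-(δ / 2 * u)) * u ≤ 2 / δ := by
      rw [Real.exp_neg, inv_mul_le_iff₀ (Real.exp_pos _)]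
      have := Real.add_one_le_exp (δ / 2 * u)
      calc u = (δ / 2 * u) * (2 / δ) := by field_simp
        _ ≤ Real.exp (δ / 2 * u) * (2 / δ) := by gcongr; linarith
    calc Real.exp (-(s.re * u)) * u
        ≤ (Real.exp (-(δ / 2 * u)) * Real.exp (-(δ / 2 * u))) * u := by gcongr
      _ = (Real.exp (-(δ / 2 * u)) * u) * Real.exp (-(δ / 2 * u)) := by ring
      _ ≤ _ := by gcongr
  · exact (h (δ / 2) (by positivity)).const_mul _
  · refine Filter.Eventually.of_forall (fun u s _ => ?_)
    apply HasDerivAt.mul_const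
    apply HasDerivAt.cexp
    have h0 : HasDerivAt (fun x : ℂ => x * (u:ℂ)) (u:ℂ) s := by
      simpa using (hasDerivAt_id s).mul_const (u:ℂ)
    exact h0.neg

lemma cpow_diff (a : ℂ) : DifferentiableOn ℂ (fun s : ℂ => s ^ a) {s : ℂ | 0 < s.re} := by
  intro s hs
  have hs' : 0 < s.re := hs
  exact (differentiableAt_id.cpow_const (Or.inl hs')).differentiableWithinAt

lemma Sub.laplace {lam : ℝ} {c : ℂ} (hlam : 0 < lam) (h : Sub lam c) (s : ℂ) (hs : 0 < s.re) :
    (∫ u in Ioi (0:ℝ), Complex.exp (-(s * u)) * G lam c u) * (s ^ (lam : ℂ) - c)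
      = s ^ ((lam : ℂ) - 1) := by
  have hopen : IsOpen {s : ℂ | 0 < s.re} := isOpen_lt continuous_const Complex.continuous_re
  have h1 : AnalyticOnNhd ℂ (fun s : ℂ =>
      (∫ u in Ioi (0:ℝ), Complex.exp (-(s * u)) * G lam c u) * (s ^ (lam : ℂ) - c))
      {s : ℂ | 0 < s.re} :=
    DifferentiableOn.analyticOnNhd
      ((h.differentiableOn hlam).mul ((cpow_diff lam).sub_const c)) hopen
  have h2 : AnalyticOnNhd ℂ (fun s : ℂ => s ^ ((lam : ℂ) - 1)) {s : ℂ | 0 < s.re} :=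
    DifferentiableOn.analyticOnNhd (cpow_diff _) hopen
  have hpc : IsPreconnected {s : ℂ | 0 < s.re} := (convex_halfSpace_re_gt 0).isPreconnected
  set x₀ : ℝ := (‖c‖ + 1) ^ (1 / lam) with hx₀
  have hx₀p : 0 < x₀ := by positivity
  have hxl : x₀ ^ lam = ‖c‖ + 1 := by
    rw [hx₀, ← Real.rpow_mul (by positivity)]
    field_simp
    simp
  refine AnalyticOnNhd.eqOn_of_preconnected_of_frequently_eq h1 h2 hpc
    (z₀ := (x₀ : ℂ)) (by simpa using hx₀p) ?_ hs
  have ht : Filter.Tendsto (fun x : ℝ => (x : ℂ)) (nhdsWithin x₀ (Ioi x₀))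
      (nhdsWithin (x₀:ℂ) {(x₀:ℂ)}ᶜ) := by
    apply tendsto_nhdsWithin_of_tendsto_nhds_of_eventually_within
    · exact (Complex.continuous_ofReal.tendsto x₀).mono_left nhdsWithin_le_nhds
    · filter_upwards [self_mem_nhdsWithin] with x hx
      have : x ≠ x₀ := ne_of_gt hx
      simpa using this
  refine ht.frequently ?_
  apply Filter.Eventually.frequently
  filter_upwards [self_mem_nhdsWithin] with x hx
  have hx' : x₀ < x := hx
  apply laplace_real lam hlam c x (by linarith)
  have : x₀ ^ lam < x ^ lam := Real.rpow_lt_rpow hx₀p.le hx' hlam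
  linarith

lemma Sub.ne {lam : ℝ} {c : ℂ} (hlam : 0 < lam) (h : Sub lam c) (s : ℂ) (hs : 0 < s.re) :
    s ^ (lam : ℂ) - c ≠ 0 := by
  intro h0
  have := h.laplace hlam s hs
  rw [h0, mul_zero] at this
  have hs0 : s ≠ 0 := by
    rintro rfl
    simp at hs
  have h3 := Complex.cpow_eq_zero_iff s ((lam:ℂ) - 1)
  exact hs0 (h3.mp this.symm).1

lemma Sub.laplace_one {lam : ℝ} {c : ℂ} (hlam : 0 < lam) (h : Sub lam c) (s : ℂ) (hs : 0 < s.re) :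
    (∫ u in Ioi (0:ℝ), Complex.exp (-(s * u)) * (G lam c u - 1))
      = c / (s * (s ^ (lam : ℂ) - c)) := by
  have hs0 : s ≠ 0 := by
    rintro rfl
    simp at hs
  have e1 : ∫ u in Ioi (0:ℝ), Complex.exp (-(s * u)) = 1 / s := by
    have := integral_exp_mul_complex_Ioi (a := -s) (by simpa using hs) 0
    simp only [neg_mul] at this
    rw [this]; simp
  have i1 : IntegrableOn (fun u : ℝ => Complex.exp (-(s * u))) (Ioi 0) := by
    have := integrableOn_exp_mul_complex_Ioi (a := -s) (by simpa using hs) 0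
    simpa only [neg_mul] using this
  simp_rw [mul_sub, mul_one]
  rw [integral_sub (h.integrable hlam s hs) i1, e1]
  have hne := h.ne hlam s hs
  have hl := h.laplace hlam s hs
  rw [Complex.cpow_sub _ _ hs0, Complex.cpow_one] at hl
  have : ∫ u in Ioi (0:ℝ), Complex.exp (-(s * u)) * G lam c u
      = s ^ (lam:ℂ) / s / (s ^ (lam : ℂ) - c) := by
    rw [eq_div_iff hne, hl]
  rw [this]
  field_simp
  ring

lemma lower_bound (lam : ℝ) (hlam : 0 < lam) (c : ℂ)
    (hroot : ∀ s : ℂ, 0 < s.re → s ^ (lam : ℂ) - c ≠ 0) (r : ℝ) (hr : 0 < r)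
    (hrc : r ^ lam = ‖c‖) :
    ∃ m : ℝ, 0 < m ∧ ∀ s : ℂ, 0 ≤ s.re → ‖s‖ ≤ 2 * r →
      m * (‖s - r * I‖ * ‖s + r * I‖) ≤ ‖s ^ (lam:ℂ) - c‖ := by
  have hK : IsCompact ({s : ℂ | 0 ≤ s.re} ∩ Metric.closedBall 0 (2 * r)) := by
    apply IsCompact.inter_left (isCompact_closedBall _ _)
    exact isClosed_le continuous_const Complex.continuous_re
  have hb : ∀ s ∈ Metric.closedBall (0:ℂ) (2 * r), ‖s - r * I‖ ≤ 3 * r ∧ ‖s + r * I‖ ≤ 3 * r := by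
    intro s hs
    have hs' : ‖s‖ ≤ 2 * r := by simpa using hs
    have hI : ‖(r:ℂ) * I‖ = r := by simp [abs_of_pos hr]
    constructor
    · have := norm_sub_le s (r * I); linarith
    · have := norm_add_le s (r * I); linarith
  suffices h : ∃ m : ℝ, 0 < m ∧ ∀ s ∈ ({s : ℂ | 0 ≤ s.re} ∩ Metric.closedBall 0 (2 * r)),
      m * (‖s - r * I‖ * ‖s + r * I‖) ≤ ‖s ^ (lam:ℂ) - c‖ by
    obtain ⟨m, hm, hm'⟩ := h
    exact ⟨m, hm, fun s hs hs' => hm' s ⟨hs, by simpa using hs'⟩⟩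
  refine hK.induction_on (p := fun S => ∃ m : ℝ, 0 < m ∧ ∀ s ∈ S,
      m * (‖s - r * I‖ * ‖s + r * I‖) ≤ ‖s ^ (lam:ℂ) - c‖) ?_ ?_ ?_ ?_
  · exact ⟨1, one_pos, by simp⟩
  · rintro S T hST ⟨m, hm, h⟩
    exact ⟨m, hm, fun s hs => h s (hST hs)⟩
  · rintro S T ⟨m, hm, h⟩ ⟨m', hm', h'⟩
    refine ⟨min m m', lt_min hm hm', ?_⟩
    rintro s (hs | hs)
    · refine le_trans ?_ (h s hs)
      gcongr
      exact min_le_left _ _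
    · refine le_trans ?_ (h' s hs)
      gcongr
      exact min_le_right _ _
  · rintro s₀ ⟨hs₀, hs₀'⟩
    have hs₀re : 0 ≤ s₀.re := hs₀
    by_cases hz : s₀ ^ (lam:ℂ) - c = 0
    · have hre : s₀.re = 0 := by
        by_contra hne
        exact hroot s₀ (lt_of_le_of_ne hs₀re (Ne.symm hne)) hz
      have hc0 : s₀ ^ (lam:ℂ) = c := sub_eq_zero.mp hz
      have hns : ‖s₀‖ = r := by
        have h1 : ‖s₀‖ ^ lam = r ^ lam := by
          rw [hrc, ← hc0, Complex.norm_cpow_real]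
        exact (Real.rpow_left_inj (norm_nonneg _) hr.le hlam.ne').mp h1
      have him : |s₀.im| = r := by
        rw [← hns, Complex.abs_im_eq_norm.mpr hre]
      have hs0 : s₀ ≠ 0 := by
        rintro rfl
        simp at hns; linarith
      have hslit : s₀ ∈ slitPlane := by
        right
        intro h0
        rw [h0] at him; simp at him; linarith
      have hd : HasDerivAt (fun s : ℂ => s ^ (lam:ℂ)) ((lam:ℂ) * s₀ ^ ((lam:ℂ) - 1)) s₀ := by
        simpa using (hasDerivAt_id s₀).cpow_const (c := (lam:ℂ)) hslit
      set d : ℂ := (lam:ℂ) * s₀ ^ ((lam:ℂ) - 1) with hdd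
      have hd0 : d ≠ 0 := by
        apply mul_ne_zero
        · exact_mod_cast hlam.ne'
        · intro h0
          exact hs0 ((Complex.cpow_eq_zero_iff _ _).mp h0).1
      have hdn : 0 < ‖d‖ := norm_pos_iff.mpr hd0
      have hev := hd.isLittleO.def (half_pos hdn)
      have hlow : ∀ᶠ s in nhds s₀, (‖d‖ / 2) * ‖s - s₀‖ ≤ ‖s ^ (lam:ℂ) - c‖ := by
        filter_upwards [hev] with s hs
        rw [hc0] at hs
        have h2 : ‖(s - s₀) • d‖ ≤ ‖s ^ (lam:ℂ) - c‖ + ‖s ^ (lam:ℂ) - c - (s - s₀) • d‖ := by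
          have := norm_sub_le (s ^ (lam:ℂ) - c) (s ^ (lam:ℂ) - c - (s - s₀) • d)
          simpa using this
        rw [norm_smul] at h2
        nlinarith
      refine ⟨{s | (‖d‖ / 2) * ‖s - s₀‖ ≤ ‖s ^ (lam:ℂ) - c‖} ∩
        ({s : ℂ | 0 ≤ s.re} ∩ Metric.closedBall 0 (2 * r)),
        Filter.inter_mem (mem_nhdsWithin_of_mem_nhds hlow) self_mem_nhdsWithin,
        ‖d‖ / 2 / (3 * r), by positivity, ?_⟩
      rintro s ⟨h1, -, h3⟩
      refine le_trans ?_ h1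
      obtain ⟨hb1, hb2⟩ := hb s h3
      have hs₀e : s₀ = r * I ∨ s₀ = -(r * I) := by
        rcases abs_eq hr.le |>.mp him with h | h
        · left
          apply Complex.ext <;> simp [hre, h]
        · right
          apply Complex.ext <;> simp [hre, h]
      rw [div_mul_eq_mul_div, div_le_iff₀ (by positivity), mul_assoc]
      refine mul_le_mul_of_nonneg_left ?_ (by positivity)
      rcases hs₀e with h | h
      · rw [h]; gcongr
      · rw [h, sub_neg_eq_add, mul_comm]; gcongr
    · have hpos : 0 < ‖s₀ ^ (lam:ℂ) - c‖ := norm_pos_iff.mpr hz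
      have hcont : ContinuousAt (fun s : ℂ => ‖s ^ (lam:ℂ) - c‖) s₀ :=
        ((Complex.continuousAt_cpow_const_of_re_pos (Or.inl hs₀re) (by simpa using hlam)).sub
          continuousAt_const).norm
      have hev : ∀ᶠ s in nhds s₀, ‖s₀ ^ (lam:ℂ) - c‖ / 2 < ‖s ^ (lam:ℂ) - c‖ :=
        hcont.eventually_const_lt (by linarith)
      refine ⟨{s | ‖s₀ ^ (lam:ℂ) - c‖ / 2 < ‖s ^ (lam:ℂ) - c‖} ∩
        ({s : ℂ | 0 ≤ s.re} ∩ Metric.closedBall 0 (2 * r)),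
        Filter.inter_mem (mem_nhdsWithin_of_mem_nhds hev) self_mem_nhdsWithin,
        ‖s₀ ^ (lam:ℂ) - c‖ / 2 / ((3 * r) * (3 * r)), by positivity, ?_⟩
      rintro s ⟨h1, -, h3⟩
      refine le_trans ?_ (le_of_lt h1)
      obtain ⟨hb1, hb2⟩ := hb s h3
      rw [div_mul_eq_mul_div, div_le_iff₀ (by positivity)]
      gcongr

lemma partial_frac (r : ℝ) (hr : 0 < r) (s : ℂ) (hs : 0 < s.re) :
    1 / (‖s‖ * (‖s - r * I‖ * ‖s + r * I‖)) ≤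
      (1 / r ^ 2) * (1 / ‖s‖ + 1 / ‖s - r * I‖ + 1 / ‖s + r * I‖) := by
  have h0 : s ≠ 0 := by
    rintro rfl; simp at hs
  have h1 : s - r * I ≠ 0 := by
    intro h
    have := congrArg Complex.re h
    simp at this; linarith
  have h2 : s + r * I ≠ 0 := by
    intro h
    have := congrArg Complex.re h
    simp at this; linarith
  have hr' : (r:ℂ) ≠ 0 := by exact_mod_cast hr.ne'
  have key : 1 / (s * ((s - r * I) * (s + r * I))) =
      (1 / (r:ℂ) ^ 2) * (1 / s - (1 / 2) * (1 / (s - r * I)) - (1 / 2) * (1 / (s + r * I))) := by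
    field_simp
    ring_nf
    simp only [Complex.I_sq]
    ring
  have hn := congrArg norm key
  simp only [norm_mul, norm_div, norm_one, norm_pow, Complex.norm_real, Real.norm_of_nonneg hr.le]
    at hn
  rw [hn]
  gcongr
  refine (norm_sub_le _ _).trans ?_
  refine add_le_add ((norm_sub_le _ _).trans ?_) ?_
  · rw [norm_mul, norm_div, norm_div, norm_div, norm_one]
    have : 0 ≤ ‖s - r * I‖⁻¹ := by positivity
    norm_num
    linarith
  · rw [norm_mul, norm_div, norm_div, norm_one]
    have : 0 ≤ ‖s + r * I‖⁻¹ := by positivity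
    norm_num
    linarith

lemma far_bound (lam : ℝ) (hlam : 0 < lam) (c : ℂ) (r : ℝ) (hr : 0 < r)
    (hrc : r ^ lam = ‖c‖) :
    ∃ B : ℝ, 0 ≤ B ∧ ∀ s : ℂ, 2 * r < ‖s‖ →
      ‖c / (s * (s ^ (lam:ℂ) - c))‖ ≤ B * (1 + ‖s.im‖) ^ (-(1 + lam)) := by
  have h2 : (2:ℝ) ^ (-lam) < 1 := Real.rpow_lt_one_of_one_lt_of_neg (by norm_num) (by linarith)
  set k : ℝ := 1 - (2:ℝ) ^ (-lam) with hk
  have hk0 : 0 < k := by linarith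
  set m : ℝ := min (1 / 2) r with hm
  have hm0 : 0 < m := lt_min (by norm_num) hr
  refine ⟨‖c‖ / k * m ^ (-(1 + lam)), by positivity, ?_⟩
  intro s hs
  have hs0 : 0 < ‖s‖ := by linarith
  have hlow : ‖s‖ ^ lam * k ≤ ‖s ^ (lam:ℂ) - c‖ := by
    have h3 := norm_sub_norm_le (s ^ (lam:ℂ)) c
    rw [Complex.norm_cpow_real, ← hrc] at h3
    have h4 : r ^ lam ≤ ‖s‖ ^ lam * 2 ^ (-lam) := by
      rw [Real.rpow_neg (by norm_num), ← div_eq_mul_inv, ← Real.div_rpow hs0.le (by norm_num)]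
      apply Real.rpow_le_rpow hr.le _ hlam.le
      linarith
    rw [hk]; linarith
  have hms : m * (1 + ‖s.im‖) ≤ ‖s‖ := by
    have h5 : ‖s.im‖ ≤ ‖s‖ := Complex.abs_im_le_norm s
    have h6 : m ≤ 1 / 2 := min_le_left _ _
    have h7 : m ≤ r := min_le_right _ _
    nlinarith [norm_nonneg s.im]
  have hp : 0 < 1 + ‖s.im‖ := by positivity
  rw [norm_div, norm_mul]
  calc ‖c‖ / (‖s‖ * ‖s ^ (lam:ℂ) - c‖) ≤ ‖c‖ / (‖s‖ * (‖s‖ ^ lam * k)) := by gcongr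
    _ = ‖c‖ / k * ‖s‖ ^ (-(1 + lam)) := by
        rw [Real.rpow_neg hs0.le, Real.rpow_add hs0, Real.rpow_one]
        field_simp
    _ ≤ ‖c‖ / k * (m * (1 + ‖s.im‖)) ^ (-(1 + lam)) := by
        gcongr ?_ * ?_
        exact Real.rpow_le_rpow_of_nonpos (by positivity) hms (by linarith)
    _ = _ := by
        rw [Real.mul_rpow hm0.le hp.le]; ring

lemma intervalIntegrable_abs_rpow (e : ℝ) (he : -1 < e) (a b : ℝ) :
    IntervalIntegrable (fun x : ℝ => |x| ^ e) volume a b := by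
  have hpos : ∀ b : ℝ, 0 ≤ b → IntervalIntegrable (fun x : ℝ => |x| ^ e) volume 0 b := by
    intro b hb
    refine (intervalIntegral.intervalIntegrable_rpow' he (a := 0) (b := b)).congr ?_
    intro x hx
    rw [uIoc_of_le hb] at hx
    simp only [abs_of_pos hx.1]
  have hall : ∀ b : ℝ, IntervalIntegrable (fun x : ℝ => |x| ^ e) volume 0 b := by
    intro b
    rcases le_total 0 b with hb | hb
    · exact hpos b hb
    · rw [IntervalIntegrable.iff_comp_neg]
      simpa using hpos (-b) (by linarith)
  exact (hall a).symm.trans (hall b)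

lemma inv_norm_le (e δ y y₀ : ℝ) (he : 0 < e) (he1 : e < 1) (hδ : 0 < δ) (hy : y ≠ y₀)
    (s : ℂ) (hre : s.re = δ) (him : s.im = y - y₀) :
    1 / ‖s‖ ≤ δ ^ (-e) * |y - y₀| ^ (e - 1) := by
  have hp : 0 < |y - y₀| := abs_pos.mpr (sub_ne_zero.mpr hy)
  have h1 : δ ≤ ‖s‖ := by
    have := Complex.abs_re_le_norm s
    rwa [hre, abs_of_pos hδ] at this
  have h2 : |y - y₀| ≤ ‖s‖ := by
    have := Complex.abs_im_le_norm s
    rwa [him] at this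
  have hs : 0 < ‖s‖ := lt_of_lt_of_le hδ h1
  calc 1 / ‖s‖ = ‖s‖ ^ (-e) * ‖s‖ ^ (e - 1) := by
        rw [← Real.rpow_add hs]
        have : -e + (e - 1) = -1 := by ring
        rw [this, Real.rpow_neg_one, one_div]
    _ ≤ _ := by
        gcongr ?_ * ?_
        · exact Real.rpow_le_rpow_of_nonpos hδ h1 (by linarith)
        · exact Real.rpow_le_rpow_of_nonpos hp h2 (by linarith)

lemma Phi_bound (lam : ℝ) (hlam : 0 < lam) (c : ℂ) (hc : c ≠ 0)
    (hroot : ∀ s : ℂ, 0 < s.re → s ^ (lam : ℂ) - c ≠ 0) (e : ℝ) (he : 0 < e) (he1 : e < 1) :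
    ∃ b1 b2 : ℝ → ℝ, ∃ Z : Set ℝ, Z.Finite ∧ Integrable b1 ∧ Integrable b2 ∧
      ∀ δ : ℝ, 0 < δ → ∀ y : ℝ, y ∉ Z → ∀ s : ℂ, s.re = δ → s.im = y →
        ‖c / (s * (s ^ (lam:ℂ) - c))‖ ≤ δ ^ (-e) * b1 y + b2 y := by
  have hcn : 0 < ‖c‖ := norm_pos_iff.mpr hc
  set r : ℝ := ‖c‖ ^ (1 / lam) with hr
  have hr0 : 0 < r := by positivity
  have hrl : r ^ lam = ‖c‖ := by
    rw [hr, ← Real.rpow_mul (by positivity)]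
    field_simp
    simp
  obtain ⟨m, hm, hlow⟩ := lower_bound lam hlam c hroot r hr0 hrl
  obtain ⟨B, hB, hfar⟩ := far_bound lam hlam c r hr0 hrl
  refine ⟨(Ioc (-(2 * r)) (2 * r)).indicator (fun y =>
      (‖c‖ / m * (1 / r ^ 2)) * (|y| ^ (e - 1) + |y - r| ^ (e - 1) + |y + r| ^ (e - 1))),
    fun y => B * (1 + ‖y‖) ^ (-(1 + lam)), {0, r, -r, -(2 * r)}, by simp, ?_, ?_, ?_⟩
  · rw [integrable_indicator_iff measurableSet_Ioc]
    rw [← intervalIntegrable_iff_integrableOn_Ioc_of_le (by linarith)]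
    refine IntervalIntegrable.const_mul ?_ _
    have h0 := intervalIntegrable_abs_rpow (e - 1) (by linarith)
    refine ((h0 _ _).add ?_).add ?_
    · have := (h0 (-(2 * r) - r) (2 * r - r)).comp_sub_right r
      simpa using this
    · have := (h0 (-(2 * r) + r) (2 * r + r)).comp_add_right r
      simpa using this
  · exact (integrable_one_add_norm (by simpa using hlam)).const_mul B
  · intro δ hδ y hy s hre him
    simp only [mem_insert_iff, mem_singleton_iff, not_or] at hy
    obtain ⟨hy0, hyr, hyr', hy2⟩ := hy
    have hs : 0 < s.re := by rw [hre]; exact hδ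
    have hsn : 0 < ‖s‖ := by
      apply norm_pos_iff.mpr
      rintro rfl; simp at hs
    have hb2 : 0 ≤ B * (1 + ‖y‖) ^ (-(1 + lam)) := by positivity
    rcases le_or_gt ‖s‖ (2 * r) with hle | hgt
    · have hyI : y ∈ Ioc (-(2 * r)) (2 * r) := by
        have h1 : |s.im| ≤ ‖s‖ := Complex.abs_im_le_norm s
        rw [him] at h1
        have h2 := abs_le.mp (h1.trans hle)
        exact ⟨lt_of_le_of_ne h2.1 (Ne.symm hy2), h2.2⟩
      rw [indicator_of_mem hyI]
      have hl := hlow s hs.le hle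
      have hp1 : 0 < ‖s - r * I‖ := by
        apply norm_pos_iff.mpr
        intro h
        have := congrArg Complex.re h
        simp at this; linarith
      have hp2 : 0 < ‖s + r * I‖ := by
        apply norm_pos_iff.mpr
        intro h
        have := congrArg Complex.re h
        simp at this; linarith
      have hpf := partial_frac r hr0 s hs
      have e0 := inv_norm_le e δ y 0 he he1 hδ hy0 s hre (by simp [him])
      have e1 := inv_norm_le e δ y r he he1 hδ hyr (s - r * I) (by simp [hre]) (by simp [him])
      have e2 := inv_norm_le e δ y (-r) he he1 hδ hyr' (s + r * I) (by simp [hre]) (by simp [him])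
      rw [sub_zero] at e0
      rw [sub_neg_eq_add] at e2
      calc ‖c / (s * (s ^ (lam:ℂ) - c))‖ = ‖c‖ / (‖s‖ * ‖s ^ (lam:ℂ) - c‖) := by
            rw [norm_div, norm_mul]
        _ ≤ ‖c‖ / (‖s‖ * (m * (‖s - r * I‖ * ‖s + r * I‖))) := by gcongr
        _ = ‖c‖ / m * (1 / (‖s‖ * (‖s - r * I‖ * ‖s + r * I‖))) := by field_simp
        _ ≤ ‖c‖ / m * ((1 / r ^ 2) * (1 / ‖s‖ + 1 / ‖s - r * I‖ + 1 / ‖s + r * I‖)) := by gcongr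
        _ ≤ ‖c‖ / m * ((1 / r ^ 2) * (δ ^ (-e) * |y| ^ (e - 1) + δ ^ (-e) * |y - r| ^ (e - 1)
              + δ ^ (-e) * |y + r| ^ (e - 1))) := by gcongr
        _ = δ ^ (-e) * (‖c‖ / m * (1 / r ^ 2) *
              (|y| ^ (e - 1) + |y - r| ^ (e - 1) + |y + r| ^ (e - 1))) := by ring
        _ ≤ _ := by linarith
    · have h1 := hfar s hgt
      rw [him] at h1
      refine h1.trans ?_
      have : 0 ≤ (Ioc (-(2 * r)) (2 * r)).indicator (fun y =>
        (‖c‖ / m * (1 / r ^ 2)) * (|y| ^ (e - 1) + |y - r| ^ (e - 1) + |y + r| ^ (e - 1))) y :=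
        indicator_nonneg (fun y _ => by positivity) y
      have h3 : 0 ≤ δ ^ (-e) := by positivity
      have := mul_nonneg h3 this
      linarith

lemma Sub.growth {lam : ℝ} {c : ℂ} (hlam : 0 < lam) (h : Sub lam c) (hc : c ≠ 0)
    (e : ℝ) (he : 0 < e) (he1 : e < 1) :
    ∃ C : ℝ, 0 ≤ C ∧ ∀ u : ℝ, 1 ≤ u → ‖G lam c u‖ ≤ C * u ^ e := by
  obtain ⟨b1, b2, Z, hZ, hb1, hb2, hb⟩ :=
    Phi_bound lam hlam c hc (fun s hs => h.ne hlam s hs) e he he1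
  have h2pi : (2 * Real.pi) ≠ 0 := by positivity
  have hb1' := hb1.comp_mul_left' h2pi
  have hb2' := hb2.comp_mul_left' h2pi
  set I1 := ∫ ξ, b1 (2 * Real.pi * ξ) with hI1
  set I2 := ∫ ξ, b2 (2 * Real.pi * ξ) with hI2
  have hZ' : ∀ᵐ ξ : ℝ, 2 * Real.pi * ξ ∉ Z := by
    have hf : ((fun ξ : ℝ => 2 * Real.pi * ξ) ⁻¹' Z).Finite :=
      hZ.preimage (fun x _ y _ hxy => mul_left_cancel₀ h2pi hxy)
    exact hf.countable.ae_notMem volume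
  have main : ∀ δ : ℝ, 0 < δ → ∀ u : ℝ, 0 < u →
      Real.exp (-(δ * u)) * ‖G lam c u - 1‖ ≤ δ ^ (-e) * I1 + I2 := by
    intro δ hδ u hu
    let k : ℝ → ℂ := fun v => Complex.exp (-((δ:ℂ) * v)) * (G lam c (max v 0) - 1)
    have hkc : Continuous k := by
      have := (continuous_G lam hlam c).comp (continuous_id.max (continuous_const (y := (0:ℝ))))
      simp only [k]
      refine Continuous.mul (by fun_prop) (this.sub continuous_const)
    have hk0 : ∀ v, v ∉ Ioi (0:ℝ) → k v = 0 := by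
      intro v hv
      have : v ≤ 0 := not_lt.mp hv
      simp [k, max_eq_right this, G_zero lam hlam]
    have hkp : ∀ v ∈ Ioi (0:ℝ), k v = Complex.exp (-((δ:ℂ) * v)) * (G lam c v - 1) := by
      intro v hv
      simp [k, max_eq_left (le_of_lt (mem_Ioi.mp hv))]
    have hki : Integrable k := by
      rw [← integrableOn_iff_integrable_of_support_subset (s := Ioi 0)]
      · refine IntegrableOn.congr_fun ?_ (fun v hv => (hkp v hv).symm) measurableSet_Ioi
        have i1 : IntegrableOn (fun u : ℝ => Complex.exp (-((δ:ℂ) * u))) (Ioi 0) := by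
          have := integrableOn_exp_mul_complex_Ioi (a := -(δ:ℂ)) (by simpa using hδ) 0
          simpa only [neg_mul] using this
        have := (h.integrable hlam (δ:ℂ) (by simpa using hδ)).sub i1
        refine this.congr_fun (fun v _ => ?_) measurableSet_Ioi
        simp only [Pi.sub_apply]
        ring
      · intro v hv
        by_contra hv'
        exact hv (hk0 v hv')
    have hF : ∀ ξ : ℝ, FourierTransform.fourier k ξ =
        c / (((δ:ℂ) + (2 * Real.pi * ξ : ℝ) * I) *
          (((δ:ℂ) + (2 * Real.pi * ξ : ℝ) * I) ^ (lam:ℂ) - c)) := by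
      intro ξ
      rw [← h.laplace_one hlam _ (by simpa using hδ), Real.fourier_real_eq_integral_exp_smul]
      rw [← setIntegral_eq_integral_of_forall_compl_eq_zero (s := Ioi 0)]
      · apply setIntegral_congr_fun measurableSet_Ioi
        intro v hv
        simp only [smul_eq_mul]
        rw [hkp v hv, ← mul_assoc, ← Complex.exp_add]
        congr 2
        push_cast
        ring
      · intro v hv
        rw [hk0 v hv, smul_zero]
    have hFb : ∀ᵐ ξ : ℝ, ‖FourierTransform.fourier k ξ‖ ≤
        δ ^ (-e) * b1 (2 * Real.pi * ξ) + b2 (2 * Real.pi * ξ) := by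
      filter_upwards [hZ'] with ξ hξ
      rw [hF]
      exact hb δ hδ _ hξ _ (by simp) (by simp)
    have hbi : Integrable (fun ξ : ℝ => δ ^ (-e) * b1 (2 * Real.pi * ξ) + b2 (2 * Real.pi * ξ)) :=
      (hb1'.const_mul _).add hb2'
    have hFm : AEStronglyMeasurable (FourierTransform.fourier k) volume := by
      have : FourierTransform.fourier k = fun ξ : ℝ =>
        c / (((δ:ℂ) + (2 * Real.pi * ξ : ℝ) * I) *
          (((δ:ℂ) + (2 * Real.pi * ξ : ℝ) * I) ^ (lam:ℂ) - c)) := funext hF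
      rw [this]
      apply Measurable.aestronglyMeasurable
      fun_prop
    have hFi : Integrable (FourierTransform.fourier k) := hbi.mono' hFm hFb
    have hinv := congrFun (hkc.fourierInv_fourier_eq hki hFi) u
    rw [Real.fourierInv_eq'] at hinv
    have hn : ‖k u‖ = Real.exp (-(δ * u)) * ‖G lam c u - 1‖ := by
      rw [hkp u hu, norm_mul, norm_exp_mul]
      simp
    rw [← hn, ← hinv]
    refine (norm_integral_le_of_norm_le hbi ?_).trans ?_
    · filter_upwards [hFb] with ξ hξ
      rw [norm_smul, Complex.norm_exp_ofReal_mul_I, one_mul]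
      exact hξ
    · rw [integral_add (hb1'.const_mul _) hb2', integral_const_mul]
  refine ⟨1 + Real.exp 1 * (|I1| + |I2|), by positivity, ?_⟩
  intro u hu
  have hu0 : 0 < u := by linarith
  have hm := main (1 / u) (by positivity) u hu0
  have hue : 1 ≤ u ^ e := Real.one_le_rpow hu he.le
  have h1 : (1 / u) ^ (-e) = u ^ e := by
    rw [one_div, Real.inv_rpow hu0.le, Real.rpow_neg hu0.le, inv_inv]
  have h2 : 1 / u * u = 1 := by field_simp
  rw [h1, h2] at hm
  have h3 : ‖G lam c u - 1‖ ≤ Real.exp 1 * (u ^ e * I1 + I2) := by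
    have := mul_le_mul_of_nonneg_left hm (Real.exp_pos 1).le
    rwa [← mul_assoc, ← Real.exp_add, add_neg_cancel, Real.exp_zero, one_mul] at this
  have h4 : ‖G lam c u‖ ≤ ‖G lam c u - 1‖ + 1 := by
    have := norm_add_le (G lam c u - 1) 1
    simpa using this
  have h5 : u ^ e * I1 + I2 ≤ (|I1| + |I2|) * u ^ e := by
    have := le_abs_self I1
    have := le_abs_self I2
    have := abs_nonneg I2
    nlinarith
  have h6 := mul_le_mul_of_nonneg_left h5 (Real.exp_pos 1).le
  linarith

lemma G_comp (lam : ℝ) (hlam : 0 < lam) (c : ℂ) (sig t : ℝ) (ht : 0 < t) :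
    G lam c (t ^ (-sig / lam)) = mlE lam (c * ((t ^ (-sig) : ℝ) : ℂ)) := by
  unfold G
  rw [← Real.rpow_mul ht.le]
  congr 4
  field_simp

lemma Sub.bound {lam : ℝ} {c : ℂ} (hlam : 0 < lam) (h : Sub lam c) (sig : ℝ) (hsig : 0 < sig)
    (e : ℝ) (he : 0 < e) :
    ∃ C : ℝ, 0 ≤ C ∧ ∀ t : ℝ, 0 < t → t < 1 →
      ‖mlE lam (c * ((t ^ (-sig) : ℝ) : ℂ))‖ ≤ C * t ^ (-e) := by
  by_cases hc : c = 0
  · refine ⟨1, zero_le_one, fun t ht ht1 => ?_⟩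
    rw [hc, zero_mul, mlE_zero, norm_one, one_mul]
    exact Real.one_le_rpow_of_pos_of_le_one_of_nonpos ht ht1.le (by linarith)
  · obtain ⟨C, hC, hCb⟩ := h.growth hlam hc (min (e * lam / sig) (1 / 2))
      (by positivity) (lt_of_le_of_lt (min_le_right _ _) (by norm_num))
    refine ⟨C, hC, fun t ht ht1 => ?_⟩
    have h1 : (1:ℝ) ≤ t ^ (-sig / lam) := by
      apply Real.one_le_rpow_of_pos_of_le_one_of_nonpos ht ht1.le
      rw [neg_div]
      have : 0 < sig / lam := by positivity
      linarith
    have h2 := hCb _ h1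
    rw [G_comp lam hlam c sig t ht] at h2
    refine h2.trans ?_
    gcongr
    calc (t ^ (-sig / lam)) ^ (min (e * lam / sig) (1 / 2))
        ≤ (t ^ (-sig / lam)) ^ (e * lam / sig) := by
          apply Real.rpow_le_rpow_of_exponent_le h1 (min_le_left _ _)
      _ = t ^ (-e) := by
          rw [← Real.rpow_mul ht.le]
          congr 1
          field_simp

lemma not_sub {lam : ℝ} {c : ℂ} (hlam : 0 < lam) (h : ¬ Sub lam c) (sig : ℝ) (hsig : 0 < sig)
    (N a : ℝ) (ha : 0 < a) :
    ¬ IntegrableOn (fun t : ℝ => t ^ N * ‖mlE lam (c * ((t ^ (-sig) : ℝ) : ℂ))‖) (Ioo 0 a) := by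
  intro hi
  apply h
  intro δ hδ
  have hGc := continuous_G lam hlam c
  set κ : ℝ := -sig / lam with hκ
  have hκ0 : κ < 0 := by
    rw [hκ, neg_div]
    have : 0 < sig / lam := by positivity
    linarith
  set M : ℝ := (κ - 1 - N) / κ with hM
  have hMk : κ - 1 - κ * M = N := by
    have hne := hκ0.ne
    rw [hM]; field_simp; ring
  set U : ℝ := a ^ κ with hU
  have hU0 : 0 < U := by positivity
  let f : ℝ → ℝ := (Ioi U).indicator (fun u => u ^ (-M) * ‖G lam c u‖)
  have hf : IntegrableOn f (Ioi 0) := by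
    rw [← integrableOn_Ioi_comp_rpow_iff' f hκ0.ne]
    have h1 : IntegrableOn ((Ioo 0 a).indicator
        (fun t : ℝ => t ^ N * ‖mlE lam (c * ((t ^ (-sig) : ℝ) : ℂ))‖)) (Ioi 0) :=
      ((integrable_indicator_iff measurableSet_Ioo).mpr hi).integrableOn
    refine h1.congr_fun ?_ measurableSet_Ioi
    intro t ht
    have ht0 : 0 < t := ht
    by_cases hta : t < a
    · have hm : t ^ κ ∈ Ioi U := Real.rpow_lt_rpow_of_neg ht0 hta hκ0
      simp only [f, smul_eq_mul]
      rw [indicator_of_mem hm, indicator_of_mem (show t ∈ Ioo 0 a from ⟨ht0, hta⟩),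
        G_comp lam hlam c sig t ht0, ← mul_assoc, ← Real.rpow_mul ht0.le, ← Real.rpow_add ht0,
        ← hMk]
      congr 2
      ring
    · have hm : t ^ κ ∉ Ioi U := by
        rw [mem_Ioi, not_lt]
        exact Real.rpow_le_rpow_of_nonpos ha (not_lt.mp hta) hκ0.le
      simp only [f, smul_eq_mul]
      rw [indicator_of_notMem hm, indicator_of_notMem (fun h => hta h.2), mul_zero]
  have hf2 : IntegrableOn (fun u => u ^ (-M) * ‖G lam c u‖) (Ioi U) := by
    have h1 := hf.mono_set (Ioi_subset_Ioi hU0.le)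
    refine h1.congr_fun ?_ measurableSet_Ioi
    intro u hu
    exact indicator_of_mem hu _
  have ht := tendsto_rpow_mul_exp_neg_mul_atTop_nhds_zero M δ hδ
  have hev : ∀ᶠ u : ℝ in Filter.atTop, u ^ M * Real.exp (-δ * u) < 1 :=
    ht.eventually_lt_const (by norm_num)
  obtain ⟨V, hV⟩ := Filter.eventually_atTop.mp hev
  set W := max U V with hW
  have hW0 : 0 < W := lt_of_lt_of_le hU0 (le_max_left _ _)
  rw [← Ioc_union_Ioi_eq_Ioi hW0.le]
  apply IntegrableOn.union
  · have : Continuous (fun u : ℝ => Real.exp (-(δ * u)) * ‖G lam c u‖) := by fun_prop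
    exact (this.integrableOn_Icc).mono_set Ioc_subset_Icc_self
  · refine Integrable.mono' (hf2.mono_set (Ioi_subset_Ioi (le_max_left U V))) ?_ ?_
    · apply Continuous.aestronglyMeasurable
      fun_prop
    · filter_upwards [ae_restrict_mem measurableSet_Ioi] with u hu
      have hu' : W < u := hu
      have hu0 : 0 < u := hW0.trans hu'
      have h1 := hV u ((le_max_right U V).trans hu'.le)
      rw [Real.norm_of_nonneg (by positivity)]
      gcongr
      rw [Real.rpow_neg hu0.le, le_inv_comm₀ (Real.exp_pos _) (by positivity),
        ← one_div, le_div_iff₀ (Real.exp_pos _)]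
      rw [neg_mul] at h1
      exact h1.le

lemma mlE_lower (lam : ℝ) (hlam : 0 < lam) (c : ℂ) (tau : ℝ) (htau : 0 < tau) :
    ∃ (k : ℕ) (m a : ℝ), 0 < m ∧ 0 < a ∧ a ≤ 1 / 2 ∧ ∀ t ∈ Ioo (0:ℝ) a,
      m * t ^ k ≤ ‖mlE lam (c * (((1 - t) ^ (-tau) : ℝ) : ℂ))‖ := by
  have hdiff : Differentiable ℂ (fun z : ℂ => mlE lam (c * z)) :=
    (differentiable_mlE lam hlam).comp (differentiable_id.const_mul c)
  have hAn : AnalyticOnNhd ℂ (fun z : ℂ => mlE lam (c * z)) univ :=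
    hdiff.differentiableOn.analyticOnNhd isOpen_univ
  have hnz : ¬ ∀ᶠ z in nhds (1:ℂ), mlE lam (c * z) = 0 := by
    intro hz
    have := AnalyticOnNhd.eqOn_of_preconnected_of_eventuallyEq hAn
      (analyticOnNhd_const (v := (0:ℂ))) isPreconnected_univ (mem_univ (1:ℂ)) hz
    have h0 := this (mem_univ (0:ℂ))
    simp [mlE_zero] at h0
  obtain ⟨k, g, hg, hg1, hev⟩ :=
    (hAn 1 (mem_univ _)).exists_eventuallyEq_pow_smul_nonzero_iff.mpr hnz
  have hgp : 0 < ‖g 1‖ := norm_pos_iff.mpr hg1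
  have hev2 : ∀ᶠ z in nhds (1:ℂ), ‖g 1‖ / 2 < ‖g z‖ :=
    hg.continuousAt.norm.eventually_const_lt (by linarith)
  have ht : Filter.Tendsto (fun t : ℝ => (((1 - t) ^ (-tau) : ℝ) : ℂ)) (nhds 0) (nhds 1) := by
    have h1 : ContinuousAt (fun t : ℝ => (1 - t) ^ (-tau)) 0 :=
      (continuousAt_const.sub continuousAt_id).rpow_const (Or.inl (by simp))
    have h2 := (Complex.continuous_ofReal.continuousAt).comp h1
    have h3 := h2.tendsto
    simpa [Function.comp_def] using h3
  have hev3 := ht.eventually (hev.and hev2)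
  obtain ⟨a, ha, hab⟩ := Metric.eventually_nhds_iff.mp hev3
  refine ⟨k, tau ^ k * (‖g 1‖ / 2), min a (1 / 2), by positivity, by positivity,
    min_le_right _ _, ?_⟩
  rintro t ⟨ht0, hta⟩
  have hta1 : t < a := hta.trans_le (min_le_left _ _)
  have hta2 : t < 1 / 2 := hta.trans_le (min_le_right _ _)
  obtain ⟨he, hl⟩ := hab (y := t) (by simpa [abs_of_pos ht0] using hta1)
  rw [he, norm_smul, norm_pow]
  have hz : tau * t ≤ ‖(((1 - t) ^ (-tau) : ℝ) : ℂ) - 1‖ := by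
    have h1 : 0 < 1 - t := by linarith
    have h2 : tau * t + 1 ≤ (1 - t) ^ (-tau) := by
      rw [Real.rpow_def_of_pos h1]
      refine le_trans ?_ (Real.add_one_le_exp _)
      have := Real.log_le_sub_one_of_pos h1
      nlinarith
    have h3 : (((1 - t) ^ (-tau) : ℝ) : ℂ) - 1 = (((1 - t) ^ (-tau) - 1 : ℝ) : ℂ) := by
      push_cast; rfl
    rw [h3, Complex.norm_real]
    refine le_trans ?_ (le_abs_self _)
    linarith
  calc tau ^ k * (‖g 1‖ / 2) * t ^ k = (tau * t) ^ k * (‖g 1‖ / 2) := by rw [mul_pow]; ring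
    _ ≤ _ := by gcongr

lemma arg_eq (p : ℂ) (sig t : ℝ) (ht : 0 < t) :
    -p / (t : ℂ) ^ (sig : ℂ) = -p * ((t ^ (-sig) : ℝ) : ℂ) := by
  rw [← Complex.ofReal_cpow ht.le, Real.rpow_neg ht.le, Complex.ofReal_inv, div_eq_mul_inv]

/-- The integrand. -/
noncomputable def F (lam sig tau : ℝ) (p q e1 e2 : ℂ) (t : ℝ) : ℂ :=
  (t : ℂ) ^ (e1 - 1) * (1 - (t : ℂ)) ^ (e2 - 1) *
      mlE lam (-p / (t : ℂ) ^ (sig : ℂ)) * mlE lam (-q / (1 - (t : ℂ)) ^ (tau : ℂ))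

lemma norm_F (lam sig tau : ℝ) (p q e1 e2 : ℂ) (t : ℝ) (ht : t ∈ Ioo (0:ℝ) 1) :
    ‖F lam sig tau p q e1 e2 t‖ = t ^ (e1.re - 1) * (1 - t) ^ (e2.re - 1) *
      ‖mlE lam (-p * ((t ^ (-sig) : ℝ) : ℂ))‖ *
      ‖mlE lam (-q * (((1 - t) ^ (-tau) : ℝ) : ℂ))‖ := by
  have h1 : 0 < 1 - t := by linarith [ht.2]
  have h2 : (1 - (t:ℂ)) = ((1 - t : ℝ) : ℂ) := by push_cast; rfl
  unfold F
  rw [h2, arg_eq p sig t ht.1, arg_eq q tau (1 - t) h1]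
  simp only [norm_mul]
  rw [Complex.norm_cpow_eq_rpow_re_of_pos ht.1, Complex.norm_cpow_eq_rpow_re_of_pos h1]
  simp

lemma measurable_F (lam sig tau : ℝ) (hlam : 0 < lam) (p q e1 e2 : ℂ) :
    Measurable (F lam sig tau p q e1 e2) := by
  have := (differentiable_mlE lam hlam).continuous.measurable
  unfold F
  fun_prop

lemma integrable_F (lam sig tau : ℝ) (hlam : 0 < lam) (hsig : 0 < sig) (htau : 0 < tau)
    (p q e1 e2 : ℂ) (he1 : 0 < e1.re) (he2 : 0 < e2.re) (hp : Sub lam (-p)) (hq : Sub lam (-q)) :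
    IntegrableOn (F lam sig tau p q e1 e2) (Ioo 0 1) := by
  obtain ⟨C, hC, hCb⟩ := hp.bound hlam sig hsig (e1.re / 2) (by positivity)
  obtain ⟨D, hD, hDb⟩ := hq.bound hlam tau htau (e2.re / 2) (by positivity)
  have hB := Complex.betaIntegral_convergent (u := ((e1.re / 2 : ℝ) : ℂ))
    (v := ((e2.re / 2 : ℝ) : ℂ)) (by rw [Complex.ofReal_re]; positivity)
    (by rw [Complex.ofReal_re]; positivity)
  rw [intervalIntegrable_iff_integrableOn_Ioo_of_le zero_le_one] at hB
  refine Integrable.mono' (hB.norm.const_mul (C * D))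
    (measurable_F lam sig tau hlam p q e1 e2).aestronglyMeasurable ?_
  filter_upwards [ae_restrict_mem measurableSet_Ioo] with t ht
  have h0 : 0 < t := ht.1
  have h1 : 0 < 1 - t := by linarith [ht.2]
  have h2 : (1 - (t:ℂ)) = ((1 - t : ℝ) : ℂ) := by push_cast; rfl
  rw [norm_F lam sig tau p q e1 e2 t ht, norm_mul, h2,
    Complex.norm_cpow_eq_rpow_re_of_pos h0, Complex.norm_cpow_eq_rpow_re_of_pos h1]
  have a1 := hCb t h0 ht.2
  have a2 := hDb (1 - t) h1 (by linarith)
  calc _ ≤ t ^ (e1.re - 1) * (1 - t) ^ (e2.re - 1) * (C * t ^ (-(e1.re / 2))) *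
        (D * (1 - t) ^ (-(e2.re / 2))) := by gcongr
    _ = C * D * ((t ^ (e1.re - 1) * t ^ (-(e1.re / 2))) *
          ((1 - t) ^ (e2.re - 1) * (1 - t) ^ (-(e2.re / 2)))) := by ring
    _ ≤ _ := by
        rw [← Real.rpow_add h0, ← Real.rpow_add h1]
        apply le_of_eq
        simp only [Complex.sub_re, Complex.ofReal_re, Complex.one_re]
        congr 3
        · ring
        · ring

lemma not_integrable_F (lam sig tau : ℝ) (hlam : 0 < lam) (hsig : 0 < sig) (htau : 0 < tau)
    (p q e1 e2 : ℂ) (hp : ¬ Sub lam (-p)) :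
    ¬ IntegrableOn (F lam sig tau p q e1 e2) (Ioo 0 1) := by
  intro hi
  obtain ⟨k, m, a, hm, ha, ha2, hlow⟩ := mlE_lower lam hlam (-q) tau htau
  apply not_sub hlam hp sig hsig (e1.re - 1 + k) a ha
  set x := e2.re - 1 with hx
  set m' : ℝ := min 1 ((1 / 2 : ℝ) ^ x) with hm'
  have hm'0 : 0 < m' := by positivity
  have hi' := (hi.mono_set (Ioo_subset_Ioo_right (by linarith : a ≤ 1))).norm
  refine Integrable.mono' (hi'.const_mul (1 / (m * m'))) ?_ ?_
  · have := (differentiable_mlE lam hlam).continuous.measurable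
    apply Measurable.aestronglyMeasurable
    fun_prop
  · filter_upwards [ae_restrict_mem measurableSet_Ioo] with t ht
    have h0 : 0 < t := ht.1
    have h1 : 1 / 2 ≤ 1 - t := by linarith [ht.2]
    have h1' : 0 < 1 - t := by linarith
    rw [norm_F lam sig tau p q e1 e2 t ⟨h0, by linarith⟩, Real.norm_of_nonneg (by positivity)]
    have h3 : m' ≤ (1 - t) ^ x := by
      rcases le_total 0 x with hx0 | hx0
      · exact (min_le_right _ _).trans (Real.rpow_le_rpow (by norm_num) h1 hx0)
      · exact (min_le_left _ _).trans
          (Real.one_le_rpow_of_pos_of_le_one_of_nonpos h1' (by linarith) hx0)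
    have h4 := hlow t ht
    rw [Real.rpow_add h0, Real.rpow_natCast]
    set A := ‖mlE lam (-p * ((t ^ (-sig) : ℝ) : ℂ))‖ with hA
    calc t ^ (e1.re - 1) * t ^ k * A
        = 1 / (m * m') * (t ^ (e1.re - 1) * m' * A * (m * t ^ k)) := by field_simp
      _ ≤ _ := by gcongr

lemma extBeta_eq (lam sig tau : ℝ) (p q e1 e2 : ℂ) :
    extBeta lam sig tau p q e1 e2 = ∫ t in Ioo (0:ℝ) 1, F lam sig tau p q e1 e2 t := rfl

lemma extBeta_symm (lam sig tau : ℝ) (p q e1 e2 : ℂ) :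
    extBeta lam sig tau p q e1 e2 = extBeta lam tau sig q p e2 e1 := by
  rw [extBeta_eq, extBeta_eq, ← integral_Ioc_eq_integral_Ioo, ← integral_Ioc_eq_integral_Ioo,
    ← intervalIntegral.integral_of_le zero_le_one, ← intervalIntegral.integral_of_le zero_le_one]
  have h := intervalIntegral.integral_comp_sub_left (a := 0) (b := 1)
    (fun t => F lam sig tau p q e1 e2 t) 1
  simp only [sub_self, sub_zero] at h
  rw [← h]
  congr 1
  ext t
  unfold F
  push_cast
  rw [sub_sub_cancel]
  ring

end ExtBetaAux

open ExtBetaAux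

theorem extBeta_functional_relation (lam sig tau : ℝ) (hlam : 0 < lam) (hsig : 0 < sig)
    (htau : 0 < tau) (p q e1 e2 : ℂ) (hp : 0 ≤ p.re) (hq : 0 ≤ q.re)
    (he1 : 0 < e1.re) (he2 : 0 < e2.re) :
    extBeta lam sig tau p q (e1 + 1) e2 + extBeta lam sig tau p q e1 (e2 + 1)
      = extBeta lam sig tau p q e1 e2 := by
  by_cases hP : Sub lam (-p)
  · by_cases hQ : Sub lam (-q)
    · have i1 := integrable_F lam sig tau hlam hsig htau p q (e1 + 1) e2
        (by simp; linarith) he2 hP hQ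
      have i2 := integrable_F lam sig tau hlam hsig htau p q e1 (e2 + 1)
        he1 (by simp; linarith) hP hQ
      rw [extBeta_eq, extBeta_eq, extBeta_eq, ← integral_add i1 i2]
      apply setIntegral_congr_fun measurableSet_Ioo
      intro t ht
      have h0 : (t:ℂ) ≠ 0 := by exact_mod_cast ht.1.ne'
      have h1 : (1 - (t:ℂ)) ≠ 0 := by
        rw [sub_ne_zero]
        exact_mod_cast ht.2.ne'
      have a1 : (t:ℂ) ^ (e1 + 1 - 1) = t ^ (e1 - 1) * t := by
        rw [show e1 + 1 - 1 = (e1 - 1) + 1 by ring, Complex.cpow_add _ _ h0, Complex.cpow_one]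
      have a2 : (1 - (t:ℂ)) ^ (e2 + 1 - 1) = (1 - (t:ℂ)) ^ (e2 - 1) * (1 - t) := by
        rw [show e2 + 1 - 1 = (e2 - 1) + 1 by ring, Complex.cpow_add _ _ h1, Complex.cpow_one]
      simp only [F]
      rw [a1, a2]
      ring
    · have hz : ∀ a b, extBeta lam sig tau p q a b = 0 := fun a b => by
        rw [extBeta_symm, extBeta_eq]
        exact integral_undef (not_integrable_F lam tau sig hlam htau hsig q p b a hQ)
      rw [hz, hz, hz, add_zero]
  · have hz : ∀ a b, extBeta lam sig tau p q a b = 0 := fun a b => by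
      rw [extBeta_eq]
      exact integral_undef (not_integrable_F lam sig tau hlam hsig htau p q a b hP)
    rw [hz, hz, hz, add_zero]
end

section
/- Let λ, σ, τ > 0 be real, p, q complex with Re(p) > 0, Re(q) > 0, and η₁, η₂ complex with Re(η₁) > 0. Assume that the function t ↦ t^{η₁-1}(1-t)^{-η₂} E_λ(−p/t^σ) E_λ(−q/(1-t)^τ) is integrable on (0,1), so that B_{p,q}^{λ;σ,τ}(η₁, 1−η₂) is defined by the same integral formula. Then B_{p,q}^{λ;σ,τ}(η₁, 1−η₂) = Σ_{n=0}^∞ ((η₂)_n / n!) · B_{p,q}^{λ;σ,τ}(η₁+n, 1), where (η₂)_n = η₂(η₂+1)⋯(η₂+n−1) is the Pochhammer symbol. -/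
open MeasureTheory Set Complex

lemma gamma_lower (R a : ℝ) (hR : 0 < R) (ha : 0 ≤ a) :
    R ^ a * Real.exp (-R) ≤ Real.Gamma (a + 1) := by
  rw [Real.Gamma_eq_integral (by linarith), ← integral_exp_neg_Ioi, ← integral_const_mul]
  have h1 : IntegrableOn (fun x : ℝ => Real.exp (-x) * x ^ (a + 1 - 1)) (Ioi 0) :=
    Real.GammaIntegral_convergent (by linarith)
  calc ∫ x in Ioi R, R ^ a * Real.exp (-x) ≤ ∫ x in Ioi R, Real.exp (-x) * x ^ (a + 1 - 1) := by
        apply setIntegral_mono_on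
        · exact (integrableOn_exp_neg_Ioi R).const_mul _
        · exact h1.mono_set (Ioi_subset_Ioi hR.le)
        · exact measurableSet_Ioi
        · intro x hx
          have hx : R < x := hx
          rw [mul_comm, add_sub_cancel_right]
          gcongr
    _ ≤ _ := by
        apply setIntegral_mono_set h1
        · filter_upwards [ae_restrict_mem measurableSet_Ioi] with x hx
          have hx : 0 < x := hx
          simp only [Pi.zero_apply]
          positivity
        · exact (Ioi_subset_Ioi hR.le).eventuallyLE

lemma norm_Gamma_ml (lam : ℝ) (n : ℕ) :
    Complex.Gamma (lam * n + 1) = ((Real.Gamma (lam * n + 1) : ℝ) : ℂ) := by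
  rw [← Complex.Gamma_ofReal]; push_cast; rfl

lemma ml_term_bound (lam : ℝ) (hlam : 0 < lam) (M : ℝ) (hM : 0 < M) :
    ∃ C : ℝ, ∀ n : ℕ, ∀ x : ℂ, ‖x‖ ≤ M →
      ‖x ^ n / Complex.Gamma (lam * n + 1)‖ ≤ C * (1 / 2) ^ n := by
  set R : ℝ := (2 * M) ^ (1 / lam) with hRdef
  have hR : 0 < R := by positivity
  have hRl : R ^ lam = 2 * M := by
    rw [hRdef, ← Real.rpow_mul (by positivity), one_div, inv_mul_cancel₀ hlam.ne', Real.rpow_one]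
  refine ⟨Real.exp R, fun n x hx => ?_⟩
  have hG := gamma_lower R (lam * n) hR (by positivity)
  rw [Real.rpow_mul hR.le, hRl, Real.rpow_natCast] at hG
  have hGpos : 0 < Real.Gamma (lam * n + 1) := Real.Gamma_pos_of_pos (by positivity)
  rw [norm_Gamma_ml, norm_div, norm_pow, Complex.norm_real, Real.norm_of_nonneg hGpos.le,
    div_le_iff₀ hGpos]
  calc ‖x‖ ^ n ≤ M ^ n := by gcongr
    _ = Real.exp R * (1 / 2) ^ n * ((2 * M) ^ n * Real.exp (-R)) := by
        rw [Real.exp_neg, mul_pow, one_div, inv_pow]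
        have := (Real.exp_pos R).ne'
        field_simp
    _ ≤ _ := by gcongr

lemma ml_summable (lam : ℝ) (hlam : 0 < lam) (x : ℂ) :
    Summable (fun n : ℕ => x ^ n / Complex.Gamma (lam * n + 1)) := by
  obtain ⟨C, hC⟩ := ml_term_bound lam hlam (‖x‖ + 1) (by positivity)
  exact Summable.of_norm_bounded ((summable_geometric_two).mul_left C)
    (fun n => hC n x (by linarith))

lemma mlE_differentiable (lam : ℝ) (hlam : 0 < lam) : Differentiable ℂ (mlE lam) := by
  intro x
  obtain ⟨C, hC⟩ := ml_term_bound lam hlam (‖x‖ + 1) (by positivity)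
  have h : DifferentiableOn ℂ (mlE lam) (Metric.ball 0 (‖x‖ + 1)) := by
    unfold mlE
    refine differentiableOn_tsum_of_summable_norm ((summable_geometric_two).mul_left C) ?_
      Metric.isOpen_ball ?_
    · intro i
      fun_prop
    · intro i w hw
      exact hC i w (by simpa using (Metric.mem_ball.1 hw).le)
  exact (h x (by simp)).differentiableAt (Metric.isOpen_ball.mem_nhds (by simp))

lemma mlE_zero (lam : ℝ) : mlE lam 0 = 1 := by
  unfold mlE
  rw [tsum_eq_single 0]
  · simp
  · intro n hn
    simp [hn]


/-- The function `t ↦ E_λ(-q t^λ)`. -/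
noncomputable def mlF (lam : ℝ) (q : ℂ) (t : ℝ) : ℂ := mlE lam (-q * ((t ^ lam : ℝ) : ℂ))

/-- Its Laplace transform. -/
noncomputable def mlL (lam : ℝ) (q : ℂ) (s : ℂ) : ℂ :=
  ∫ t in Ioi (0:ℝ), cexp (-(s * t)) * mlF lam q t

lemma mlF_continuous (lam : ℝ) (hlam : 0 < lam) (q : ℂ) : Continuous (mlF lam q) := by
  unfold mlF
  refine (mlE_differentiable lam hlam).continuous.comp ?_
  refine continuous_const.mul (continuous_ofReal.comp ?_)
  exact Real.continuous_rpow_const hlam.le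

lemma laplace_large (lam : ℝ) (hlam : 0 < lam) (q : ℂ) (c : ℝ) (hc : 0 < c)
    (hcq : ‖q‖ < c ^ lam) :
    mlL lam q c * ((c:ℂ) * (((c ^ lam : ℝ) : ℂ) + q)) = ((c ^ lam : ℝ) : ℂ) := by
  have hcl : 0 < c ^ lam := Real.rpow_pos_of_pos hc _
  set F : ℕ → ℝ → ℂ := fun n t => ((-q) ^ n / Complex.Gamma (lam * n + 1)) *
    ((t ^ (lam * n + 1 - 1) * Real.exp (-(c * t)) : ℝ) : ℂ) with hF
  have hpos : ∀ n : ℕ, 0 < lam * n + 1 := fun n => by positivity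
  have hGpos : ∀ n : ℕ, 0 < Real.Gamma (lam * n + 1) := fun n => Real.Gamma_pos_of_pos (hpos n)
  have hint0 : ∀ n : ℕ, IntegrableOn (fun t : ℝ => t ^ (lam * n + 1 - 1) * Real.exp (-(c * t)))
      (Ioi 0) := by
    intro n
    have := integrableOn_rpow_mul_exp_neg_mul_rpow (p := 1) (s := lam * n + 1 - 1) (b := c)
      (by have := hpos n; linarith) zero_lt_one hc
    simpa using this
  have hval : ∀ n : ℕ, ∫ t in Ioi (0:ℝ), t ^ (lam * n + 1 - 1) * Real.exp (-(c * t)) =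
      (1 / c) * ((c ^ lam)⁻¹) ^ n * Real.Gamma (lam * n + 1) := by
    intro n
    rw [Real.integral_rpow_mul_exp_neg_mul_Ioi (hpos n) hc, Real.rpow_add (by positivity),
      Real.rpow_mul (by positivity), Real.rpow_natCast, Real.rpow_one, one_div,
      Real.inv_rpow hc.le]
    ring
  have hFint : ∀ n, Integrable (F n) (volume.restrict (Ioi 0)) := fun n =>
    ((hint0 n).ofReal).const_mul _
  have hnorm : ∀ n, ∫ t in Ioi (0:ℝ), ‖F n t‖ = (1 / c) * (‖q‖ * (c ^ lam)⁻¹) ^ n := by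
    intro n
    have : ∀ t ∈ Ioi (0:ℝ), ‖F n t‖ = (‖q‖ ^ n / Real.Gamma (lam * n + 1)) *
      (t ^ (lam * n + 1 - 1) * Real.exp (-(c * t))) := by
      intro t ht
      have ht : 0 < t := ht
      simp only [hF]
      rw [norm_mul, norm_div, norm_pow, norm_neg, norm_Gamma_ml, norm_real, norm_real,
        Real.norm_of_nonneg (hGpos n).le, Real.norm_of_nonneg (by positivity)]
    rw [setIntegral_congr_fun measurableSet_Ioi this, integral_const_mul, hval, mul_pow]
    have := (hGpos n).ne'
    field_simp
  have hr : ‖q‖ * (c ^ lam)⁻¹ < 1 := by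
    rw [← div_eq_mul_inv, div_lt_one hcl]; exact hcq
  have hsum : Summable fun n => ∫ t in Ioi (0:ℝ), ‖F n t‖ := by
    simp_rw [hnorm]
    exact (summable_geometric_of_lt_one (by positivity) hr).mul_left _
  have key := hasSum_integral_of_summable_integral_norm hFint hsum
  have h1 : ∫ t in Ioi (0:ℝ), ∑' n, F n t = mlL lam q c := by
    refine setIntegral_congr_fun measurableSet_Ioi fun t ht => ?_
    have ht : 0 < t := ht
    simp only [mlF, mlE, ← tsum_mul_left]
    refine tsum_congr fun n => ?_
    simp only [hF]
    rw [add_sub_cancel_right, Real.rpow_mul ht.le, Real.rpow_natCast, mul_pow]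
    push_cast
    ring
  have h2 : ∀ n, ∫ t in Ioi (0:ℝ), F n t = (1 / c) * (-q * ((c ^ lam : ℝ):ℂ)⁻¹) ^ n := by
    intro n
    simp only [hF]
    rw [integral_const_mul, integral_complex_ofReal, hval, norm_Gamma_ml]
    have : ((Real.Gamma (lam * n + 1) : ℝ):ℂ) ≠ 0 := by exact_mod_cast (hGpos n).ne'
    push_cast
    rw [mul_pow]
    field_simp
  have hz : ‖-q * ((c ^ lam : ℝ):ℂ)⁻¹‖ < 1 := by
    rw [norm_mul, norm_neg, norm_inv, norm_real, Real.norm_of_nonneg hcl.le]; exact hr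
  have h3 := (hasSum_geometric_of_norm_lt_one hz).mul_left (1 / (c:ℂ))
  rw [h1] at key
  simp_rw [h2] at key
  rw [key.unique h3]
  have hcne : (c:ℂ) ≠ 0 := by exact_mod_cast hc.ne'
  have hclne : ((c ^ lam : ℝ):ℂ) ≠ 0 := by exact_mod_cast hcl.ne'
  have hne : ((c ^ lam : ℝ):ℂ) + q ≠ 0 := by
    intro h
    have : q = -((c ^ lam : ℝ):ℂ) := by linear_combination h
    rw [this, norm_neg, norm_real, Real.norm_of_nonneg hcl.le] at hcq
    exact lt_irrefl _ hcq
  have hne2 : 1 - -q * ((c ^ lam : ℝ):ℂ)⁻¹ ≠ 0 := by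
    intro h
    apply hne
    have : (((c ^ lam : ℝ):ℂ) + q) = (1 - -q * ((c ^ lam : ℝ):ℂ)⁻¹) * ((c ^ lam : ℝ):ℂ) := by
      field_simp
      ring
    rw [this, h, zero_mul]
  have : (1 - -q * ((c ^ lam : ℝ):ℂ)⁻¹)⁻¹ = ((c ^ lam : ℝ):ℂ) / (((c ^ lam : ℝ):ℂ) + q) := by
    rw [inv_eq_one_div, div_eq_div_iff hne2 hne]
    field_simp
    ring
  rw [this]
  field_simp

lemma mlL_integrable (lam : ℝ) (q : ℂ) 
    (hI : ∀ c : ℝ, 0 < c → IntegrableOn (fun t : ℝ => Real.exp (-(c * t)) * ‖mlF lam q t‖) (Ioi 0))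
    (hlam : 0 < lam) (s : ℂ) (hs : 0 < s.re) :
    IntegrableOn (fun t : ℝ => cexp (-(s * t)) * mlF lam q t) (Ioi 0) := by
  refine (hI s.re hs).mono' ?_ ?_
  · have := mlF_continuous lam hlam q
    exact Continuous.aestronglyMeasurable (by fun_prop)
  · refine Filter.Eventually.of_forall fun t => ?_
    rw [norm_mul, Complex.norm_exp]
    simp

lemma mlL_differentiable (lam : ℝ) (hlam : 0 < lam) (q : ℂ) 
    (hI : ∀ c : ℝ, 0 < c → IntegrableOn (fun t : ℝ => Real.exp (-(c * t)) * ‖mlF lam q t‖) (Ioi 0))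
    : DifferentiableOn ℂ (mlL lam q) {s : ℂ | 0 < s.re} := by
  intro s hs
  have hs : 0 < s.re := hs
  have hcont := mlF_continuous lam hlam q
  apply DifferentiableAt.differentiableWithinAt
  have hopen : IsOpen {z : ℂ | s.re / 2 < z.re} := isOpen_lt continuous_const continuous_re
  have := hasDerivAt_integral_of_dominated_loc_of_deriv_le (𝕜 := ℂ)
    (μ := volume.restrict (Ioi (0:ℝ))) (x₀ := s)
    (F := fun s t => cexp (-(s * t)) * mlF lam q t)
    (F' := fun s t => (cexp (-(s * t)) * (-(1 * (t:ℂ)))) * mlF lam q t)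
    (bound := fun t => (4 / s.re) * (Real.exp (-((s.re / 4) * t)) * ‖mlF lam q t‖))
    (hopen.mem_nhds (by simp; linarith))
    (Filter.Eventually.of_forall fun z => Continuous.aestronglyMeasurable (by fun_prop))
    (mlL_integrable lam q hI hlam s hs)
    (Continuous.aestronglyMeasurable (by fun_prop)) ?_
    ((hI _ (by positivity)).const_mul _) ?_
  · exact this.2.differentiableAt
  · filter_upwards [ae_restrict_mem measurableSet_Ioi] with t ht z hz
    have ht : 0 < t := ht
    have hz : s.re / 2 < z.re := hz
    rw [norm_mul, norm_mul, Complex.norm_exp, ← mul_assoc]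
    refine mul_le_mul_of_nonneg_right ?_ (norm_nonneg _)
    simp only [neg_re, mul_re, ofReal_re, ofReal_im, mul_zero, sub_zero, one_mul, norm_neg,
      norm_real, Real.norm_of_nonneg ht.le]
    have h1 : Real.exp (-(z.re * t)) ≤ Real.exp (-((s.re / 4) * t)) * Real.exp (-((s.re / 4) * t)) := by
      rw [← Real.exp_add]
      apply Real.exp_le_exp.2
      nlinarith
    have h2 : t ≤ (4 / s.re) * Real.exp ((s.re / 4) * t) := by
      have := Real.add_one_le_exp ((s.re / 4) * t)
      rw [div_mul_eq_mul_div, le_div_iff₀ hs]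
      nlinarith
    have h3 : Real.exp (-((s.re / 4) * t)) * t ≤ 4 / s.re := by
      calc Real.exp (-((s.re / 4) * t)) * t ≤ Real.exp (-((s.re / 4) * t)) * ((4 / s.re) * Real.exp ((s.re / 4) * t)) := by gcongr
        _ = _ := by
          rw [Real.exp_neg]
          have := (Real.exp_pos ((s.re / 4) * t)).ne'
          field_simp
    calc _ ≤ (Real.exp (-((s.re / 4) * t)) * Real.exp (-((s.re / 4) * t))) * t := by gcongr
      _ = Real.exp (-((s.re / 4) * t)) * (Real.exp (-((s.re / 4) * t)) * t) := by ring
      _ ≤ Real.exp (-((s.re / 4) * t)) * (4 / s.re) := by gcongr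
      _ = _ := by ring
  · refine Filter.Eventually.of_forall fun t z hz => ?_
    exact ((((hasDerivAt_id z).mul_const (t:ℂ)).neg).cexp).mul_const _

lemma laplace_identity (lam : ℝ) (hlam : 0 < lam) (q : ℂ) 
    (hI : ∀ c : ℝ, 0 < c → IntegrableOn (fun t : ℝ => Real.exp (-(c * t)) * ‖mlF lam q t‖) (Ioi 0))
    (s : ℂ) (hs : 0 < s.re) :
    mlL lam q s * (s * (s ^ (lam:ℂ) + q)) = s ^ (lam:ℂ) := by
  have hopen : IsOpen {z : ℂ | 0 < z.re} := isOpen_lt continuous_const continuous_re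
  have hpow : DifferentiableOn ℂ (fun z : ℂ => z ^ (lam:ℂ)) {z : ℂ | 0 < z.re} := by
    intro z hz
    exact (differentiableAt_id.cpow_const (Or.inl hz)).differentiableWithinAt
  have hA : AnalyticOnNhd ℂ (fun z => mlL lam q z * (z * (z ^ (lam:ℂ) + q))) {z : ℂ | 0 < z.re} := by
    refine DifferentiableOn.analyticOnNhd ?_ hopen
    exact (mlL_differentiable lam hlam q hI).mul (differentiableOn_id.mul (hpow.add_const _))
  have hB : AnalyticOnNhd ℂ (fun z : ℂ => z ^ (lam:ℂ)) {z : ℂ | 0 < z.re} := hpow.analyticOnNhd hopen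
  have hconn : IsPreconnected {z : ℂ | 0 < z.re} := (convex_halfSpace_re_gt 0).isPreconnected
  set c0 : ℝ := (‖q‖ + 1) ^ (1 / lam) with hc0
  have hc0pos : 0 < c0 := by positivity
  have hlarge : ∀ c : ℝ, c0 ≤ c → ‖q‖ < c ^ lam := by
    intro c hc
    calc ‖q‖ < ‖q‖ + 1 := by linarith
      _ = c0 ^ lam := by
        rw [hc0, ← Real.rpow_mul (by positivity), one_div, inv_mul_cancel₀ hlam.ne', Real.rpow_one]
      _ ≤ c ^ lam := by gcongr
  refine hA.eqOn_of_preconnected_of_frequently_eq hB hconn (z₀ := (c0:ℂ)) (by simpa using hc0pos) ?_ hs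
  have htend : Filter.Tendsto (fun n : ℕ => ((c0 + 1 / ((n:ℝ) + 1) : ℝ) : ℂ)) Filter.atTop
      (nhdsWithin (c0:ℂ) {(c0:ℂ)}ᶜ) := by
    apply tendsto_nhdsWithin_of_tendsto_nhds_of_eventually_within
    · have := (tendsto_one_div_add_atTop_nhds_zero_nat (𝕜 := ℝ)).const_add c0
      rw [add_zero] at this
      exact (continuous_ofReal.tendsto _).comp this
    · refine Filter.Eventually.of_forall fun n => ?_
      simp only [mem_compl_iff, mem_singleton_iff, ofReal_inj]
      have : 0 < 1 / ((n:ℝ) + 1) := by positivity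
      linarith
  refine htend.frequently (Filter.Frequently.of_forall fun n => ?_)
  have hp : 0 < 1 / ((n:ℝ) + 1) := by positivity
  have h := laplace_large lam hlam q (c0 + 1 / ((n:ℝ) + 1)) (by linarith) (hlarge _ (by linarith))
  rw [ofReal_cpow (by linarith)] at h
  exact h


lemma rpow_diff_lower (mu l u : ℝ) (hmu : 0 < mu) (hl : 0 < l) (hlu : l ≤ u) :
    ∃ k > 0, ∀ A ∈ Icc l u, ∀ B ∈ Icc l u, k * |A - B| ≤ |A ^ mu - B ^ mu| := by
  have hcont : ContinuousOn (fun x : ℝ => mu * x ^ (mu - 1)) (Icc l u) := by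
    intro x hx
    have hx0 : x ≠ 0 := (lt_of_lt_of_le hl hx.1).ne'
    exact ((Real.continuousAt_rpow_const x _ (Or.inl hx0)).const_mul mu).continuousWithinAt
  obtain ⟨x0, hx0, hmin⟩ := isCompact_Icc.exists_isMinOn (nonempty_Icc.2 hlu) hcont
  have hx0pos : 0 < x0 := lt_of_lt_of_le hl hx0.1
  refine ⟨mu * x0 ^ (mu - 1), by positivity, ?_⟩
  have hd : ∀ x ∈ Icc l u, HasDerivAt (fun x : ℝ => x ^ mu) (mu * x ^ (mu - 1)) x := by
    intro x hx
    exact Real.hasDerivAt_rpow_const (Or.inl (lt_of_lt_of_le hl hx.1).ne')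
  have key : ∀ A ∈ Icc l u, ∀ B ∈ Icc l u, A ≤ B →
      mu * x0 ^ (mu - 1) * (B - A) ≤ B ^ mu - A ^ mu := by
    intro A hA B hB hAB
    refine (convex_Icc l u).mul_sub_le_image_sub_of_le_deriv (f := fun x : ℝ => x ^ mu)
      (fun x hx => (hd x hx).continuousAt.continuousWithinAt) ?_ ?_ A hA B hB hAB
    · intro x hx
      exact (hd x (interior_subset hx)).differentiableAt.differentiableWithinAt
    · intro x hx
      rw [(hd x (interior_subset hx)).deriv]
      exact hmin (interior_subset hx)
  intro A hA B hB
  rcases le_total A B with h | h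
  · rw [abs_sub_comm A B, abs_sub_comm (A ^ mu), abs_of_nonneg (sub_nonneg.2 h)]
    exact (key A hA B hB h).trans (le_abs_self _)
  · rw [abs_of_nonneg (sub_nonneg.2 h)]
    exact (key B hB A hA h).trans (le_abs_self _)

/-- truncated power -/
noncomputable def phiR (del R : ℝ) (y : ℝ) : ℝ := (Icc (-R) R).indicator (fun y => |y| ^ (del - 1)) y

lemma phiR_nonneg (del R y : ℝ) : 0 ≤ phiR del R y :=
  indicator_nonneg (fun _ _ => by positivity) _

lemma phiR_of_le (del R y : ℝ) (h : |y| ≤ R) : phiR del R y = |y| ^ (del - 1) := by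
  unfold phiR
  rw [indicator_of_mem]
  exact abs_le.1 h

lemma phiR_integrable (del R : ℝ) (hdel : 0 < del) : Integrable (phiR del R) := by
  unfold phiR
  rw [integrable_indicator_iff measurableSet_Icc]
  have h1 : IntegrableOn (fun y : ℝ => |y| ^ (del - 1)) (Icc 0 R) := by
    have := (intervalIntegral.intervalIntegrable_rpow' (a := 0) (b := R) (r := del - 1) (by linarith)).1
    rw [← integrableOn_Icc_iff_integrableOn_Ioc] at this
    refine this.congr_fun (fun y hy => ?_) measurableSet_Icc
    simp only [abs_of_nonneg hy.1]
  have h2 : IntegrableOn (fun y : ℝ => |y| ^ (del - 1)) (Icc (-R) 0) := by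
    have := h1.comp_neg
    simpa using this
  refine (h2.union h1).mono_set ?_
  intro y hy
  rcases le_total y 0 with h | h
  · left; exact ⟨hy.1, h⟩
  · right; exact ⟨h, hy.2⟩

/-- tail function -/
noncomputable def psiT (lam : ℝ) (y : ℝ) : ℝ := (1 + ‖y‖ ^ 2) ^ (-(1 + lam) / 2)

lemma psiT_integrable (lam : ℝ) (hlam : 0 < lam) : Integrable (psiT lam) :=
  integrable_rpow_neg_one_add_norm_sq (E := ℝ) (r := 1 + lam) (by simp; exact hlam)

lemma psiT_nonneg (lam y : ℝ) : 0 ≤ psiT lam y := by unfold psiT; positivity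

set_option maxHeartbeats 2000000 in
lemma pointwise_bound (lam : ℝ) (hlam : 0 < lam) (q : ℂ) (hq : q ≠ 0)
    (hI : ∀ c : ℝ, 0 < c → IntegrableOn (fun t : ℝ => Real.exp (-(c * t)) * ‖mlF lam q t‖) (Ioi 0))
    (A : ℝ) (N : ℕ) (hA : ∀ c : ℝ, 0 < c → c ≤ 1 →
      ∫ t in Ioi (0:ℝ), Real.exp (-(c * t)) * ‖mlF lam q t‖ ≤ A / c ^ N)
    (kap : ℝ) (hkap : 0 < kap) :
    ∃ del > 0, ∃ R C c0 : ℝ, 0 < c0 ∧ 0 ≤ C ∧ ∀ c : ℝ, 0 < c → c ≤ c0 → ∃ b : ℝ,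
      ∀ y : ℝ, y ≠ 0 → y ≠ b → y ≠ -b →
        ‖mlL lam q (c + y * I) - 1 / (c + y * I)‖ ≤
          C * c ^ (-kap) * (phiR del R y + phiR del R (y - b) + phiR del R (y + b) + psiT lam y) := by
  set rho := ‖q‖ with hrho
  have hrho0 : 0 < rho := norm_pos_iff.2 hq
  -- basic constants
  obtain ⟨del, hdel0, hdel1, hdelk⟩ : ∃ del : ℝ, 0 < del ∧ del < 1 ∧ del * (N + 1) ≤ kap := by
    refine ⟨min (1 / 2) (kap / (N + 1)), by positivity, ?_, ?_⟩
    · exact lt_of_le_of_lt (min_le_left _ _) (by norm_num)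
    · calc min (1 / 2) (kap / (N + 1)) * (N + 1) ≤ kap / (N + 1) * (N + 1) := by
            gcongr; exact min_le_right _ _
        _ = kap := by field_simp
  set Y : ℝ := rho ^ (1 / lam) with hY
  set Y1 : ℝ := (rho / 2) ^ (1 / lam) with hY1
  set Y2 : ℝ := (2 * rho) ^ (1 / lam) with hY2
  have hYpos : 0 < Y := by positivity
  have hY1pos : 0 < Y1 := by positivity
  have hY2pos : 0 < Y2 := by positivity
  have hpw : ∀ x : ℝ, 0 < x → (x ^ (1 / lam)) ^ lam = x := by
    intro x hx
    rw [← Real.rpow_mul hx.le, one_div, inv_mul_cancel₀ hlam.ne', Real.rpow_one]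
  have hYl : Y ^ lam = rho := hpw _ hrho0
  have hY1l : Y1 ^ lam = rho / 2 := hpw _ (by positivity)
  have hY2l : Y2 ^ lam = 2 * rho := hpw _ (by positivity)
  have hY1Y : Y1 ≤ Y := by rw [hY1, hY]; gcongr; linarith
  have hYY2 : Y ≤ Y2 := by rw [hY2, hY]; gcongr; linarith
  obtain ⟨k, hk0, hk⟩ := rpow_diff_lower (lam / 2) (Y1 ^ 2) (Y2 ^ 2) (by positivity) (by positivity)
    (by gcongr; linarith)
  set A' : ℝ := (|A| + 1) * (Y2 / (rho / 2)) with hA'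
  have hA'pos : 0 < A' := by positivity
  set K : ℝ := 1 + 1 / Y2 ^ 2 with hK
  have hKpos : 0 < K := by positivity
  set C2 : ℝ := rho * (2 * K ^ ((1 + lam) / 2)) with hC2
  set C3 : ℝ := rho * (1 / Y1 * (A' ^ del * (k * (Y / 2)) ^ (del - 1))) with hC3
  have hC2pos : 0 < C2 := by positivity
  have hC3pos : 0 < C3 := by positivity
  refine ⟨del, hdel0, Y2 + Y, 2 + C2 + C3, min 1 (Y / 2), by positivity, by positivity, ?_⟩
  intro c hc hcc0
  have hc1 : c ≤ 1 := hcc0.trans (min_le_left _ _)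
  have hcY : c ≤ Y / 2 := hcc0.trans (min_le_right _ _)
  set b : ℝ := Real.sqrt (Y ^ 2 - c ^ 2) with hb
  have hb2 : b ^ 2 = Y ^ 2 - c ^ 2 := Real.sq_sqrt (by nlinarith)
  have hb0 : 0 ≤ b := Real.sqrt_nonneg _
  have hbY : b ≤ Y := by
    apply (sq_le_sq₀ hb0 hYpos.le).1; nlinarith
  have hbY2 : Y / 2 ≤ b := by
    apply (sq_le_sq₀ (by positivity) hb0).1; nlinarith
  refine ⟨b, fun y hy0 hyb hynb => ?_⟩
  set s : ℂ := c + y * I with hs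
  have hsre : s.re = c := by simp [hs]
  have hsim : s.im = y := by simp [hs]
  have hs0 : 0 < s.re := by rw [hsre]; exact hc
  have hsne : s ≠ 0 := by intro h; rw [h] at hs0; simp at hs0
  set m : ℝ := ‖s‖ with hm
  have hm0 : 0 < m := norm_pos_iff.2 hsne
  have hmsq : m ^ 2 = c ^ 2 + y ^ 2 := by
    rw [hm, Complex.sq_norm, Complex.normSq_apply, hsre, hsim]; ring
  have hcm : c ≤ m := by apply (sq_le_sq₀ hc.le hm0.le).1; nlinarith [sq_nonneg y]
  have hym : |y| ≤ m := by apply (sq_le_sq₀ (abs_nonneg y) hm0.le).1; rw [sq_abs]; nlinarith [sq_nonneg c]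
  have hid := laplace_identity lam hlam q hI s hs0
  set F : ℂ := s ^ (lam:ℂ) + q with hF
  have hspow : ‖s ^ (lam:ℂ)‖ = m ^ lam := Complex.norm_cpow_real s lam
  have hml : 0 < m ^ lam := by positivity
  have hspne : s ^ (lam:ℂ) ≠ 0 := by rw [← norm_pos_iff, hspow]; exact hml
  have hFne : F ≠ 0 := by
    intro h; rw [h] at hid; simp at hid; exact hspne hid.symm
  have hF0 : 0 < ‖F‖ := norm_pos_iff.2 hFne
  have hG : mlL lam q s - 1 / s = -q / (s * F) := by
    rw [eq_div_iff (mul_ne_zero hsne hFne), sub_mul, hid]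
    field_simp
    simp [hF]
  have hGn : ‖mlL lam q s - 1 / s‖ = rho * (1 / m * (1 / ‖F‖)) := by
    rw [hG, norm_div, norm_neg, norm_mul, ← hm, ← hrho]
    field_simp
  have hFlow : |m ^ lam - rho| ≤ ‖F‖ := by
    rw [← hspow, hrho, ← norm_neg q, hF]
    have := abs_norm_sub_norm_le (s ^ (lam:ℂ)) (-q)
    simpa using this
  have hLn : ‖mlL lam q s‖ ≤ A / c ^ N := by
    refine le_trans ?_ (hA c hc hc1)
    unfold mlL
    refine (norm_integral_le_integral_norm _).trans (le_of_eq ?_)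
    congr 1
    ext t
    rw [norm_mul, Complex.norm_exp]
    simp [hsre]
  have hp1 := phiR_nonneg del (Y2 + Y) y
  have hp2 := phiR_nonneg del (Y2 + Y) (y - b)
  have hp3 := phiR_nonneg del (Y2 + Y) (y + b)
  have hp4 := psiT_nonneg lam y
  have hckap : 1 ≤ c ^ (-kap) := Real.one_le_rpow_of_pos_of_le_one_of_nonpos hc hc1 (by linarith)
  rw [hGn]
  rcases le_total (m ^ lam) (rho / 2) with h1 | h1
  · -- small region
    have hmY1 : m ≤ Y1 := by
      rw [← hY1l] at h1
      exact (Real.rpow_le_rpow_iff hm0.le hY1pos.le hlam).1 h1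
    have e1 : 1 / ‖F‖ ≤ 2 / rho := by
      rw [div_le_div_iff₀ hF0 hrho0]
      have : rho - m ^ lam ≤ |m ^ lam - rho| := by rw [abs_sub_comm]; exact le_abs_self _
      linarith
    have e2 : 1 / m ≤ c ^ (-kap) * |y| ^ (del - 1) := by
      have hy' : 0 < |y| := abs_pos.2 hy0
      calc 1 / m = m ^ (-del) * m ^ (del - 1) := by
            rw [← Real.rpow_add hm0, show -del + (del - 1) = -1 by ring, Real.rpow_neg_one, one_div]
        _ ≤ c ^ (-del) * |y| ^ (del - 1) := by
            apply mul_le_mul _ _ (by positivity) (by positivity)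
            · exact Real.rpow_le_rpow_of_nonpos hc hcm (by linarith)
            · exact Real.rpow_le_rpow_of_nonpos hy' hym (by linarith)
        _ ≤ c ^ (-kap) * |y| ^ (del - 1) := by
            gcongr ?_ * _
            apply Real.rpow_le_rpow_of_exponent_ge hc hc1
            have : del * 1 ≤ del * (N + 1) := by gcongr; linarith [(Nat.cast_nonneg N : (0:ℝ) ≤ N)]
            linarith
    have e3 : phiR del (Y2 + Y) y = |y| ^ (del - 1) := phiR_of_le _ _ _ (by linarith)
    calc rho * (1 / m * (1 / ‖F‖)) ≤ rho * ((c ^ (-kap) * |y| ^ (del - 1)) * (2 / rho)) := by gcongr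
      _ = 2 * c ^ (-kap) * phiR del (Y2 + Y) y := by rw [e3]; field_simp
      _ ≤ _ := by gcongr <;> linarith
  · rcases le_total (2 * rho) (m ^ lam) with h2 | h2
    · -- large region
      have hmY2 : Y2 ≤ m := by
        rw [← hY2l] at h2
        exact (Real.rpow_le_rpow_iff hY2pos.le hm0.le hlam).1 h2
      have e1 : 1 / ‖F‖ ≤ 2 / m ^ lam := by
        rw [div_le_div_iff₀ hF0 hml]
        have := le_abs_self (m ^ lam - rho)
        linarith
      have e2 : m ^ (-(1 + lam)) ≤ K ^ ((1 + lam) / 2) * psiT lam y := by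
        have g1 : 1 + ‖y‖ ^ 2 ≤ K * m ^ 2 := by
          rw [Real.norm_eq_abs, sq_abs, hK, add_mul, one_mul]
          have : 1 ≤ 1 / Y2 ^ 2 * m ^ 2 := by
            rw [div_mul_eq_mul_div, one_mul, le_div_iff₀ (by positivity), one_mul]
            gcongr
          nlinarith [sq_nonneg c]
        have g2 : (K * m ^ 2) ^ (-(1 + lam) / 2) ≤ psiT lam y := by
          unfold psiT
          exact Real.rpow_le_rpow_of_nonpos (by positivity) g1 (by linarith)
        have g3 : (K * m ^ 2) ^ (-(1 + lam) / 2) = K ^ (-(1 + lam) / 2) * m ^ (-(1 + lam)) := by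
          rw [Real.mul_rpow hKpos.le (by positivity), ← Real.rpow_natCast m 2, ← Real.rpow_mul hm0.le]
          congr 2
          push_cast; ring
        have g4 : K ^ ((1 + lam) / 2) * K ^ (-(1 + lam) / 2) = 1 := by
          rw [← Real.rpow_add hKpos, show (1 + lam) / 2 + -(1 + lam) / 2 = 0 by ring, Real.rpow_zero]
        calc m ^ (-(1 + lam)) = K ^ ((1 + lam) / 2) * (K * m ^ 2) ^ (-(1 + lam) / 2) := by
              rw [g3, ← mul_assoc, g4, one_mul]
          _ ≤ _ := by gcongr
      calc rho * (1 / m * (1 / ‖F‖)) ≤ rho * (1 / m * (2 / m ^ lam)) := by gcongr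
        _ = rho * (2 * m ^ (-(1 + lam))) := by
            rw [Real.rpow_neg hm0.le, Real.rpow_add hm0, Real.rpow_one]; field_simp
        _ ≤ rho * (2 * (K ^ ((1 + lam) / 2) * psiT lam y)) := by gcongr
        _ = C2 * 1 * psiT lam y := by rw [hC2]; ring
        _ ≤ _ := by gcongr <;> linarith
    · -- middle region
      have hmY1 : Y1 ≤ m := by
        rw [← hY1l] at h1
        exact (Real.rpow_le_rpow_iff hY1pos.le hm0.le hlam).1 h1
      have hmY2 : m ≤ Y2 := by
        rw [← hY2l] at h2
        exact (Real.rpow_le_rpow_iff hm0.le hY2pos.le hlam).1 h2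
      have d1 : 1 / ‖F‖ ≤ A' * c ^ (-(N:ℝ)) := by
        have : 1 / ‖F‖ = ‖mlL lam q s‖ * (m / m ^ lam) := by
          have := congrArg norm hid
          rw [norm_mul, norm_mul, hspow, ← hm] at this
          rw [← this]
          have hLne : ‖mlL lam q s‖ ≠ 0 := by
            intro h; rw [h, zero_mul] at this; exact hml.ne this
          field_simp
        rw [this, hA', Real.rpow_neg hc.le, Real.rpow_natCast]
        calc ‖mlL lam q s‖ * (m / m ^ lam) ≤ ((|A| + 1) / c ^ N) * (Y2 / (rho / 2)) := by
              gcongr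
              refine hLn.trans ?_
              gcongr
              linarith [le_abs_self A]
          _ = _ := by field_simp
      have d2 : k * (|y - b| * |y + b|) ≤ ‖F‖ := by
        have := hk (m ^ 2) ⟨by gcongr, by gcongr⟩ (Y ^ 2) ⟨by gcongr, by gcongr⟩
        have t1 : (m ^ 2) ^ (lam / 2) = m ^ lam := by
          rw [← Real.rpow_natCast m 2, ← Real.rpow_mul hm0.le]; congr 1; push_cast; ring
        have t2 : (Y ^ 2) ^ (lam / 2) = rho := by
          rw [← hYl, ← Real.rpow_natCast Y 2, ← Real.rpow_mul hYpos.le]; congr 1; push_cast; ring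
        rw [t1, t2] at this
        rw [← abs_mul]
        have t3 : (y - b) * (y + b) = m ^ 2 - Y ^ 2 := by rw [hmsq]; linear_combination -hb2
        rw [t3]
        linarith
      -- generic conclusion
      have fin : ∀ z : ℝ, z ≠ 0 → |z| ≤ Y2 + Y → k * (Y / 2) * |z| ≤ ‖F‖ →
          rho * (1 / m * (1 / ‖F‖)) ≤ C3 * c ^ (-kap) * phiR del (Y2 + Y) z := by
        intro z hz hzR hzF
        have hz' : 0 < |z| := abs_pos.2 hz
        rw [phiR_of_le _ _ _ hzR]
        have f1 : (1 / ‖F‖) ^ del ≤ A' ^ del * c ^ (-kap) := by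
          calc (1 / ‖F‖) ^ del ≤ (A' * c ^ (-(N:ℝ))) ^ del := by gcongr
            _ = A' ^ del * c ^ (-(N:ℝ) * del) := by
              rw [Real.mul_rpow hA'pos.le (by positivity), ← Real.rpow_mul hc.le]
            _ ≤ A' ^ del * c ^ (-kap) := by
              gcongr ?_ * ?_
              apply Real.rpow_le_rpow_of_exponent_ge hc hc1
              nlinarith
        have f2 : (1 / ‖F‖) ^ (1 - del) ≤ (k * (Y / 2)) ^ (del - 1) * |z| ^ (del - 1) := by
          rw [← Real.mul_rpow (by positivity) (by positivity), one_div, Real.inv_rpow hF0.le,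
            ← Real.rpow_neg hF0.le, show -(1 - del) = del - 1 by ring]
          exact Real.rpow_le_rpow_of_nonpos (by positivity) hzF (by linarith)
        have f3 : 1 / ‖F‖ = (1 / ‖F‖) ^ del * (1 / ‖F‖) ^ (1 - del) := by
          rw [← Real.rpow_add (by positivity), add_sub_cancel, Real.rpow_one]
        calc rho * (1 / m * (1 / ‖F‖)) = rho * (1 / m * ((1 / ‖F‖) ^ del * (1 / ‖F‖) ^ (1 - del))) := by
              rw [← f3]
          _ ≤ rho * (1 / Y1 * ((A' ^ del * c ^ (-kap)) * ((k * (Y / 2)) ^ (del - 1) * |z| ^ (del - 1)))) := by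
              gcongr
          _ = _ := by rw [hC3]; ring
      rcases le_total 0 y with hy | hy
      · refine (fin (y - b) (sub_ne_zero.2 hyb) ?_ ?_).trans ?_
        · refine (abs_sub _ _).trans ?_
          rw [abs_of_nonneg hb0]; linarith
        · refine le_trans ?_ d2
          have : Y / 2 ≤ |y + b| := by rw [abs_of_nonneg (by linarith)]; linarith
          calc k * (Y / 2) * |y - b| ≤ k * |y + b| * |y - b| := by gcongr
            _ = _ := by ring
        · gcongr <;> linarith
      · refine (fin (y + b) (by intro h; apply hynb; linarith) ?_ ?_).trans ?_
        · refine (abs_add_le _ _).trans ?_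
          rw [abs_of_nonneg hb0]; linarith
        · refine le_trans ?_ d2
          have : Y / 2 ≤ |y - b| := by rw [abs_of_nonpos (by linarith)]; linarith
          calc k * (Y / 2) * |y + b| ≤ k * |y - b| * |y + b| := by gcongr
            _ = _ := by ring
        · gcongr <;> linarith

section GrowthPart
open scoped FourierTransform

set_option maxHeartbeats 1000000 in
lemma growth_aux (lam : ℝ) (hlam : 0 < lam) (q : ℂ) (hq : q ≠ 0)
    (hI : ∀ c : ℝ, 0 < c → IntegrableOn (fun t : ℝ => Real.exp (-(c * t)) * ‖mlF lam q t‖) (Ioi 0))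
    (A : ℝ) (N : ℕ) (hA : ∀ c : ℝ, 0 < c → c ≤ 1 →
      ∫ t in Ioi (0:ℝ), Real.exp (-(c * t)) * ‖mlF lam q t‖ ≤ A / c ^ N)
    (kap : ℝ) (hkap : 0 < kap) :
    ∃ T C : ℝ, 1 ≤ T ∧ ∀ t : ℝ, T ≤ t → ‖mlF lam q t‖ ≤ C * t ^ kap := by
  obtain ⟨del, hdel, R, C, c0, hc0, hC, hmain⟩ := pointwise_bound lam hlam q hq hI A N hA kap hkap
  have hphi := phiR_integrable del R hdel
  have hpsi := psiT_integrable lam hlam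
  set J : ℝ := 3 * (∫ y, phiR del R y) + ∫ y, psiT lam y with hJ
  refine ⟨max 1 (1 / c0), 1 + Real.exp 1 * (C * J), le_max_left _ _, fun t ht => ?_⟩
  have ht1 : 1 ≤ t := (le_max_left _ _).trans ht
  have ht0 : 0 < t := by linarith
  set c : ℝ := 1 / t with hc
  have hcpos : 0 < c := by positivity
  have hcc0 : c ≤ c0 := by
    have := (le_max_right _ _).trans ht
    rw [hc]; rw [div_le_iff₀ hc0] at this; rw [div_le_iff₀ ht0]; linarith
  obtain ⟨b, hb⟩ := hmain c hcpos hcc0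
  set H : ℝ → ℝ := fun y => C * c ^ (-kap) *
    (phiR del R y + phiR del R (y - b) + phiR del R (y + b) + psiT lam y) with hH
  have hphi1 : Integrable (fun y => phiR del R (y - b)) := hphi.comp_sub_right b
  have hphi2 : Integrable (fun y => phiR del R (y + b)) := hphi.comp_add_right b
  have hHint : Integrable H := (((hphi.add hphi1).add hphi2).add hpsi).const_mul _
  have hHval : ∫ y, H y = C * c ^ (-kap) * J := by
    simp only [hH]
    have hs1 : Integrable (fun y => phiR del R y + phiR del R (y - b)) := hphi.add hphi1
    have hs2 : Integrable (fun y => phiR del R y + phiR del R (y - b) + phiR del R (y + b)) :=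
      hs1.add hphi2
    rw [integral_const_mul, integral_add hs2 hpsi,
      integral_add hs1 hphi2, integral_add hphi hphi1,
      integral_sub_right_eq_self (phiR del R) b, integral_add_right_eq_self (phiR del R) b, hJ]
    ring
  have hHnn : ∀ y, 0 ≤ H y := by
    intro y
    have hp1 := phiR_nonneg del R y
    have hp2 := phiR_nonneg del R (y - b)
    have hp3 := phiR_nonneg del R (y + b)
    have hp4 := psiT_nonneg lam y
    simp only [hH]; positivity
  have hcont := mlF_continuous lam hlam q
  set u : ℝ → ℂ := (Ioi (0:ℝ)).indicator
    (fun x => cexp (-((c:ℂ) * x)) * (mlF lam q x - 1)) with hu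
  have hexp : ∀ s : ℂ, 0 < s.re → IntegrableOn (fun x : ℝ => cexp (-(s * x))) (Ioi 0) := by
    intro s hs
    have := integrableOn_exp_mul_complex_Ioi (a := -s) (by simpa using hs) 0
    simpa [neg_mul] using this
  have hLint := fun s hs => mlL_integrable lam q hI hlam s hs
  have huint : Integrable u := by
    rw [hu, integrable_indicator_iff measurableSet_Ioi]
    have := (hLint c (by simpa using hcpos)).sub (hexp c (by simpa using hcpos))
    refine this.congr_fun (fun x _ => ?_) measurableSet_Ioi
    simp only [Pi.sub_apply]; ring
  have hFu : ∀ w : ℝ, 𝓕 u w = mlL lam q (c + ((2 * Real.pi * w : ℝ):ℂ) * I)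
      - 1 / (c + ((2 * Real.pi * w : ℝ):ℂ) * I) := by
    intro w
    set s : ℂ := c + ((2 * Real.pi * w : ℝ):ℂ) * I with hs
    have hsre : s.re = c := by simp [hs]
    have hs0 : 0 < s.re := by rw [hsre]; exact hcpos
    rw [Real.fourier_real_eq_integral_exp_smul]
    have e1 : ∀ x : ℝ, cexp (↑(-2 * Real.pi * x * w) * I) • u x =
        (Ioi (0:ℝ)).indicator (fun x : ℝ => cexp (-(s * x)) * mlF lam q x - cexp (-(s * x))) x := by
      intro x
      simp only [hu, indicator]
      split_ifs
      · have : cexp (-(s * x)) = cexp (↑(-2 * Real.pi * x * w) * I) * cexp (-((c:ℂ) * x)) := by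
          rw [← Complex.exp_add]; congr 1; rw [hs]; push_cast; ring
        rw [this, smul_eq_mul]; ring
      · simp
    simp_rw [e1]
    rw [integral_indicator measurableSet_Ioi, integral_sub (hLint s hs0) (hexp s hs0)]
    congr 1
    have := integral_exp_mul_complex_Ioi (a := -s) (by simpa using hs0) 0
    simp only [neg_mul] at this
    rw [this]
    simp
  have h2pi : (2 * Real.pi) ≠ 0 := by positivity
  have hHint2 : Integrable (fun w => H (2 * Real.pi * w)) := hHint.comp_mul_left' h2pi
  have hbound : ∀ᵐ w : ℝ, ‖𝓕 u w‖ ≤ H (2 * Real.pi * w) := by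
    have hne : ∀ a : ℝ, ∀ᵐ w : ℝ, w ≠ a := fun a => by
      simp [ae_iff]
    filter_upwards [hne 0, hne (b / (2 * Real.pi)), hne (-b / (2 * Real.pi))] with w h0 h1 h2
    rw [hFu]
    apply hb
    · exact mul_ne_zero h2pi h0
    · intro h; apply h1; rw [← h]; field_simp
    · intro h; apply h2; rw [← h]; field_simp
  have hmeas : AEStronglyMeasurable (𝓕 u) volume := by
    have : Continuous (𝓕 u) := VectorFourier.fourierIntegral_continuous Real.continuous_fourierChar
      (by exact continuous_inner) huint
    exact this.aestronglyMeasurable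
  have hFint : Integrable (𝓕 u) := hHint2.mono' hmeas hbound
  have hcu : ContinuousAt u t := by
    have : ContinuousAt (fun x : ℝ => cexp (-((c:ℂ) * x)) * (mlF lam q x - 1)) t := by
      apply Continuous.continuousAt; fun_prop
    refine this.congr ?_
    filter_upwards [Ioi_mem_nhds ht0] with x hx
    rw [hu, indicator_of_mem hx]
  have hinv := huint.fourierInv_fourier_eq hFint hcu
  have hut : ‖u t‖ ≤ C * c ^ (-kap) * J := by
    rw [← hinv, Real.fourierInv_eq_fourier_neg]
    calc ‖𝓕 (𝓕 u) (-t)‖ ≤ ∫ w, ‖𝓕 u w‖ := VectorFourier.norm_fourierIntegral_le_integral_norm _ _ _ _ _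
      _ ≤ ∫ w, H (2 * Real.pi * w) := integral_mono_ae hFint.norm hHint2 hbound
      _ = (2 * Real.pi)⁻¹ * ∫ y, H y := by
          rw [Measure.integral_comp_mul_left, abs_of_pos (by positivity), smul_eq_mul]
      _ ≤ 1 * ∫ y, H y := by
          gcongr
          · exact integral_nonneg hHnn
          · apply inv_le_one_of_one_le₀
            linarith [Real.pi_gt_three]
      _ = _ := by rw [one_mul, hHval]
  have hctk : c ^ (-kap) = t ^ kap := by
    rw [hc, one_div, Real.inv_rpow ht0.le, Real.rpow_neg ht0.le, inv_inv]
  have hut2 : ‖u t‖ = Real.exp (-1) * ‖mlF lam q t - 1‖ := by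
    rw [hu, indicator_of_mem (show t ∈ Ioi (0:ℝ) from ht0), norm_mul, Complex.norm_exp]
    congr 2
    simp [hc, ht0.ne']
  have hfin : ‖mlF lam q t - 1‖ ≤ Real.exp 1 * (C * J) * t ^ kap := by
    calc ‖mlF lam q t - 1‖ = Real.exp 1 * ‖u t‖ := by
          rw [hut2, ← mul_assoc, ← Real.exp_add]; simp
      _ ≤ Real.exp 1 * (C * c ^ (-kap) * J) := by gcongr
      _ = _ := by rw [hctk]; ring
  have h1t : 1 ≤ t ^ kap := Real.one_le_rpow ht1 hkap.le
  calc ‖mlF lam q t‖ = ‖(mlF lam q t - 1) + 1‖ := by congr 1; ring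
    _ ≤ ‖mlF lam q t - 1‖ + 1 := by
        refine (norm_add_le _ _).trans ?_; simp
    _ ≤ Real.exp 1 * (C * J) * t ^ kap + t ^ kap := by gcongr
    _ = _ := by ring

/-- Polynomial growth in the mean implies sub-polynomial growth. -/
lemma growth (lam : ℝ) (hlam : 0 < lam) (q : ℂ) (hq : q ≠ 0) (T0 : ℝ) (hT0 : 0 < T0) (N : ℕ)
    (hN : IntegrableOn (fun t : ℝ => ‖mlF lam q t‖ / t ^ N) (Ioi T0))
    (kap : ℝ) (hkap : 0 < kap) :
    ∃ C : ℝ, ∀ t : ℝ, 1 ≤ t → ‖mlF lam q t‖ ≤ C * t ^ kap := by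
  have hcont := mlF_continuous lam hlam q
  have hsplit : Ioi (0:ℝ) = Ioc 0 T0 ∪ Ioi T0 := (Ioc_union_Ioi_eq_Ioi hT0.le).symm
  have hsmall : IntegrableOn (fun t : ℝ => ‖mlF lam q t‖) (Ioc 0 T0) :=
    (hcont.norm.integrableOn_Icc (a := 0) (b := T0)).mono_set Ioc_subset_Icc_self
  -- pointwise bounds
  have hb1 : ∀ c : ℝ, 0 < c → ∀ t ∈ Ioc 0 T0,
      ‖Real.exp (-(c * t)) * ‖mlF lam q t‖‖ ≤ ‖mlF lam q t‖ := by
    intro c hc t ht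
    have := ht.1
    rw [norm_mul, norm_norm, Real.norm_eq_abs, Real.abs_exp]
    have : Real.exp (-(c * t)) ≤ 1 := by
      apply Real.exp_le_one_iff.2
      have : 0 < c * t := by positivity
      linarith
    exact mul_le_of_le_one_left (norm_nonneg _) this
  have hb2 : ∀ c : ℝ, 0 < c → ∀ t ∈ Ioi T0,
      ‖Real.exp (-(c * t)) * ‖mlF lam q t‖‖ ≤ (N.factorial / c ^ N) * (‖mlF lam q t‖ / t ^ N) := by
    intro c hc t ht
    have ht0 : 0 < t := lt_trans hT0 ht
    rw [norm_mul, norm_norm, Real.norm_eq_abs, Real.abs_exp]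
    have h := Real.pow_div_factorial_le_exp (c * t) (by positivity) N
    have h2 : Real.exp (-(c * t)) ≤ (N.factorial / c ^ N) * (1 / t ^ N) := by
      rw [Real.exp_neg, inv_le_iff_one_le_mul₀ (Real.exp_pos _)]
      calc (1:ℝ) = N.factorial / c ^ N * (1 / t ^ N) * ((c * t) ^ N / N.factorial) := by
            rw [mul_pow]
            have : (N.factorial : ℝ) ≠ 0 := by positivity
            field_simp
        _ ≤ _ := by gcongr
    calc _ ≤ (N.factorial / c ^ N) * (1 / t ^ N) * ‖mlF lam q t‖ := by gcongr
      _ = _ := by ring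
  have hi1 : ∀ c : ℝ, 0 < c → IntegrableOn (fun t : ℝ => Real.exp (-(c * t)) * ‖mlF lam q t‖) (Ioc 0 T0) := by
    intro c hc
    refine hsmall.mono' (Continuous.aestronglyMeasurable (by fun_prop)) ?_
    filter_upwards [ae_restrict_mem measurableSet_Ioc] with t ht using hb1 c hc t ht
  have hi2 : ∀ c : ℝ, 0 < c → IntegrableOn (fun t : ℝ => Real.exp (-(c * t)) * ‖mlF lam q t‖) (Ioi T0) := by
    intro c hc
    refine (hN.const_mul (N.factorial / c ^ N)).mono' (Continuous.aestronglyMeasurable (by fun_prop)) ?_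
    filter_upwards [ae_restrict_mem measurableSet_Ioi] with t ht using hb2 c hc t ht
  have hI : ∀ c : ℝ, 0 < c → IntegrableOn (fun t : ℝ => Real.exp (-(c * t)) * ‖mlF lam q t‖) (Ioi 0) := by
    intro c hc
    rw [hsplit]
    exact (hi1 c hc).union (hi2 c hc)
  set A1 : ℝ := ∫ t in Ioc 0 T0, ‖mlF lam q t‖ with hA1
  set A2 : ℝ := ∫ t in Ioi T0, ‖mlF lam q t‖ / t ^ N with hA2
  have hA1n : 0 ≤ A1 := integral_nonneg (fun t => norm_nonneg _)
  have hA : ∀ c : ℝ, 0 < c → c ≤ 1 →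
      ∫ t in Ioi (0:ℝ), Real.exp (-(c * t)) * ‖mlF lam q t‖ ≤ (A1 + N.factorial * A2) / c ^ N := by
    intro c hc hc1
    rw [hsplit, setIntegral_union (Ioc_disjoint_Ioi le_rfl) measurableSet_Ioi (hi1 c hc) (hi2 c hc)]
    have e1 : ∫ t in Ioc 0 T0, Real.exp (-(c * t)) * ‖mlF lam q t‖ ≤ A1 :=
      setIntegral_mono_on (hi1 c hc) hsmall measurableSet_Ioc
        (fun t ht => (le_abs_self _).trans (hb1 c hc t ht))
    have e2 : ∫ t in Ioi T0, Real.exp (-(c * t)) * ‖mlF lam q t‖ ≤ (N.factorial / c ^ N) * A2 := by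
      rw [hA2, ← integral_const_mul]
      exact setIntegral_mono_on (hi2 c hc) (hN.const_mul _) measurableSet_Ioi
        (fun t ht => (le_abs_self _).trans (hb2 c hc t ht))
    have e3 : A1 ≤ A1 / c ^ N := by
      rw [le_div_iff₀ (by positivity)]
      exact mul_le_of_le_one_right hA1n (pow_le_one₀ hc.le hc1)
    calc _ ≤ A1 / c ^ N + (N.factorial / c ^ N) * A2 := by linarith
      _ = _ := by ring
  obtain ⟨T, C, hT, hTC⟩ := growth_aux lam hlam q hq hI _ N hA kap hkap
  obtain ⟨B, hB⟩ := isCompact_Icc.exists_bound_of_continuousOn (s := Icc 1 T) hcont.continuousOn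
  refine ⟨|C| + |B|, fun t ht => ?_⟩
  have h1t : 1 ≤ t ^ kap := Real.one_le_rpow ht hkap.le
  rcases le_total t T with h | h
  · calc ‖mlF lam q t‖ ≤ B := hB t ⟨ht, h⟩
      _ ≤ (|C| + |B|) * 1 := by linarith [le_abs_self B, abs_nonneg C]
      _ ≤ _ := by gcongr
  · refine (hTC t h).trans ?_
    gcongr
    linarith [le_abs_self C, abs_nonneg B]

end GrowthPart


lemma poch_bound (e : ℂ) (r : ℝ) (hr : 0 < r) (hre : e.re ≤ r) :
    ∃ C : ℝ, 0 ≤ C ∧ ∀ n : ℕ, ‖(ascPochhammer ℂ n).eval e‖ ≤ C * (ascPochhammer ℝ n).eval r := by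
  set M : ℝ := |e.re| * (r + |e.re|) + e.im ^ 2 with hM
  have hM0 : 0 ≤ M := by positivity
  have hstep : ∀ k : ℕ, ‖e + k‖ ≤ (r + k) * (1 + M * (1 / |(k:ℝ) + r| ^ (2:ℝ))) := by
    intro k
    have hk : (0:ℝ) ≤ k := k.cast_nonneg
    have hrk : 0 < r + k := by positivity
    have e1 : (r + k) * (1 + M * (1 / |(k:ℝ) + r| ^ (2:ℝ))) = (r + k) + M / (r + k) := by
      rw [add_comm (k:ℝ) r, abs_of_pos hrk, Real.rpow_two]; field_simp
    rw [e1]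
    refine abs_le_of_sq_le_sq' ?_ (by positivity) |>.2
    have e2 : ‖e + k‖ ^ 2 = (e.re + k) ^ 2 + e.im ^ 2 := by
      rw [Complex.sq_norm, Complex.normSq_apply]; simp; ring
    have e3 : ((r + k) + M / (r + k)) ^ 2 = (r + k) ^ 2 + 2 * M + (M / (r + k)) ^ 2 := by
      field_simp; ring
    rw [e2, e3]
    have h1 := neg_abs_le e.re
    have h2 : (r - e.re) * (r + e.re + 2 * k) ≥ (r - e.re) * (-|e.re|) :=
      mul_le_mul_of_nonneg_left (by linarith) (by linarith)
    have h3 : (r - e.re) * |e.re| ≤ (r + |e.re|) * |e.re| :=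
      mul_le_mul_of_nonneg_right (by linarith) (abs_nonneg _)
    nlinarith [sq_nonneg (M / (r + k)), sq_nonneg e.im, mul_nonneg (abs_nonneg e.re) (abs_nonneg e.re), mul_nonneg (abs_nonneg e.re) hr.le]
  have hsum : Summable (fun k : ℕ => M * (1 / |(k:ℝ) + r| ^ (2:ℝ))) :=
    ((Real.summable_one_div_nat_add_rpow r 2).2 (by norm_num)).mul_left M
  have hb0 : ∀ k : ℕ, 0 ≤ M * (1 / |(k:ℝ) + r| ^ (2:ℝ)) := fun k => by positivity
  refine ⟨Real.exp (∑' k : ℕ, M * (1 / |(k:ℝ) + r| ^ (2:ℝ))), by positivity, fun n => ?_⟩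
  have hpos : 0 ≤ (ascPochhammer ℝ n).eval r := (ascPochhammer_pos n r hr).le
  refine le_trans ?_ (mul_le_mul_of_nonneg_right
    (Real.exp_le_exp.2 (hsum.sum_le_tsum (Finset.range n) fun k _ => hb0 k)) hpos)
  clear hpos
  induction n with
  | zero => simp
  | succ n ih =>
    rw [ascPochhammer_succ_eval, ascPochhammer_succ_eval, norm_mul, Finset.sum_range_succ,
      Real.exp_add]
    have hpos : 0 ≤ (ascPochhammer ℝ n).eval r := (ascPochhammer_pos n r hr).le
    have h4 : ‖e + n‖ ≤ (r + n) * Real.exp (M * (1 / |(n:ℝ) + r| ^ (2:ℝ))) := by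
      refine (hstep n).trans ?_
      refine mul_le_mul_of_nonneg_left ?_ (by positivity)
      rw [add_comm]; exact Real.add_one_le_exp _
    calc _ ≤ _ := mul_le_mul ih h4 (norm_nonneg _) (by positivity)
      _ = _ := by ring

lemma choose_eq_poch {K : Type*} [Field K] [CharZero K] [BinomialRing K] (a : K) (n : ℕ) :
    Ring.choose (a + n - 1) n = (ascPochhammer K n).eval a / (n.factorial : K) := by
  rw [← Ring.multichoose_eq, eq_div_iff (by exact_mod_cast n.factorial_ne_zero), mul_comm,
    ← nsmul_eq_mul, Ring.factorial_nsmul_multichoose_eq_ascPochhammer,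
    Polynomial.ascPochhammer_smeval_eq_eval]

lemma binom_complex (a : ℂ) (t : ℝ) (ht0 : 0 < t) (ht1 : t < 1) :
    HasSum (fun n : ℕ => (ascPochhammer ℂ n).eval a / (n.factorial : ℂ) * (t:ℂ) ^ n)
      ((1 - (t:ℂ)) ^ (-a)) := by
  have h := (Complex.one_div_one_sub_cpow_hasFPowerSeriesOnBall_zero a).hasSum
    (y := (t:ℂ)) (by simp [Metric.mem_eball, abs_of_pos ht0, ENNReal.ofReal_lt_one, ht1, edist_dist])
  rw [Complex.cpow_neg, ← one_div]
  simp only [FormalMultilinearSeries.ofScalars_apply_eq, choose_eq_poch, smul_eq_mul,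
    zero_add] at h
  exact h

lemma binom_real (a : ℝ) (t : ℝ) (ht0 : 0 < t) (ht1 : t < 1) :
    HasSum (fun n : ℕ => (ascPochhammer ℝ n).eval a / (n.factorial : ℝ) * t ^ n)
      ((1 - t) ^ (-a)) := by
  have h := (Real.one_div_one_sub_rpow_hasFPowerSeriesOnBall_zero a).hasSum
    (y := t) (by simp [Metric.mem_eball, abs_of_pos ht0, ENNReal.ofReal_lt_one, ht1, edist_dist])
  rw [Real.rpow_neg (by linarith), ← one_div]
  simp only [FormalMultilinearSeries.ofScalars_apply_eq, choose_eq_poch, smul_eq_mul,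
    zero_add] at h
  exact h

lemma sum_swap (g : ℝ → ℂ) (e : ℂ) (r : ℝ) (hr : 0 < r) (hre : e.re ≤ r)
    (hgm : AEStronglyMeasurable g (volume.restrict (Ioo (0:ℝ) 1)))
    (hg : IntegrableOn (fun t : ℝ => (1 - t) ^ (-r) * ‖g t‖) (Ioo (0:ℝ) 1)) :
    HasSum (fun n : ℕ => (ascPochhammer ℂ n).eval e / (n.factorial : ℂ) *
        ∫ t in Ioo (0:ℝ) 1, (t:ℂ) ^ n * g t)
      (∫ t in Ioo (0:ℝ) 1, (1 - (t:ℂ)) ^ (-e) * g t) := by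
  obtain ⟨C, hC0, hC⟩ := poch_bound e r hr hre
  have h := hasSum_integral_of_dominated_convergence (μ := volume.restrict (Ioo (0:ℝ) 1))
    (F := fun (n : ℕ) (t : ℝ) =>
      (ascPochhammer ℂ n).eval e / (n.factorial : ℂ) * ((t:ℂ) ^ n * g t))
    (f := fun t : ℝ => (1 - (t:ℂ)) ^ (-e) * g t)
    (fun n t => C * ((ascPochhammer ℝ n).eval r / (n.factorial : ℝ) * t ^ n * ‖g t‖))
    ?_ ?_ ?_ ?_ ?_
  · simpa only [integral_const_mul] using h
  · intro n
    refine AEStronglyMeasurable.const_mul ?_ _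
    exact (by fun_prop : Continuous fun t : ℝ => (t:ℂ) ^ n).aestronglyMeasurable.mul hgm
  · intro n
    filter_upwards [ae_restrict_mem measurableSet_Ioo] with t ht
    rw [norm_mul, norm_mul, norm_div, norm_pow, Complex.norm_natCast, Complex.norm_real,
      Real.norm_of_nonneg ht.1.le, mul_assoc, ← mul_assoc C, mul_div_assoc']
    have := ht.1.le
    have := hC n
    gcongr
  · filter_upwards [ae_restrict_mem measurableSet_Ioo] with t ht
    exact (((binom_real r t ht.1 ht.2).mul_right ‖g t‖).mul_left C).summable
  · refine (hg.const_mul C).congr ?_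
    filter_upwards [ae_restrict_mem measurableSet_Ioo] with t ht
    exact (((binom_real r t ht.1 ht.2).mul_right ‖g t‖).mul_left C).tsum_eq.symm
  · filter_upwards [ae_restrict_mem measurableSet_Ioo] with t ht
    simpa only [mul_assoc] using (binom_complex e t ht.1 ht.2).mul_right (g t)


lemma arg_eq (q : ℂ) (u tau : ℝ) (hu : 0 < u) :
    -q / (u:ℂ) ^ (tau:ℂ) = -q * ((u ^ (-tau) : ℝ) : ℂ) := by
  rw [← Complex.ofReal_cpow hu.le, Real.rpow_neg hu.le, Complex.ofReal_inv, div_eq_mul_inv]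

lemma mlE_lower (lam : ℝ) (hlam : 0 < lam) (z0 : ℂ) :
    ∃ k : ℕ, ∃ m : ℝ, 0 < m ∧ ∀ᶠ z in nhds z0, m * ‖z - z0‖ ^ k ≤ ‖mlE lam z‖ := by
  have han : AnalyticOnNhd ℂ (mlE lam) univ :=
    (mlE_differentiable lam hlam).differentiableOn.analyticOnNhd isOpen_univ
  have hne : ¬ ∀ᶠ z in nhds z0, mlE lam z = 0 := by
    intro h
    have := han.eqOn_zero_of_preconnected_of_eventuallyEq_zero isPreconnected_univ
      (mem_univ z0) h (mem_univ 0)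
    rw [mlE_zero] at this
    simp at this
  obtain ⟨k, g, hg, hg0, hev⟩ :=
    ((han z0 (mem_univ _)).exists_eventuallyEq_pow_smul_nonzero_iff).2 hne
  have hgn : 0 < ‖g z0‖ := norm_pos_iff.2 hg0
  refine ⟨k, ‖g z0‖ / 2, by positivity, ?_⟩
  have h2 : ∀ᶠ z in nhds z0, ‖g z0‖ / 2 < ‖g z‖ :=
    hg.continuousAt.norm.eventually (lt_mem_nhds (by linarith))
  filter_upwards [hev, h2] with z hz hz2
  rw [hz, norm_smul, norm_pow, mul_comm]
  gcongr

lemma mlE_lower_t (lam sig : ℝ) (hlam : 0 < lam) (hsig : 0 < sig) (p : ℂ) (hp : p ≠ 0) :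
    ∃ k : ℕ, ∃ m : ℝ, 0 < m ∧ ∃ u0 : ℝ, 0 < u0 ∧ u0 < 1 / 2 ∧ ∀ u ∈ Ioo (0:ℝ) u0,
      m * u ^ k ≤ ‖mlE lam (-p * (((1 - u) ^ (-sig) : ℝ) : ℂ))‖ := by
  obtain ⟨k, m, hm, hev⟩ := mlE_lower lam hlam (-p)
  have hcont : Filter.Tendsto (fun u : ℝ => -p * (((1 - u) ^ (-sig) : ℝ) : ℂ)) (nhds 0)
      (nhds (-p)) := by
    have h1 : ContinuousAt (fun u : ℝ => -p * (((1 - u) ^ (-sig) : ℝ) : ℂ)) 0 := by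
      refine continuousAt_const.mul (Complex.continuous_ofReal.continuousAt.comp ?_)
      refine ContinuousAt.rpow_const (by fun_prop) (Or.inl (by norm_num))
    simpa [ContinuousAt] using h1
  have hpn : 0 < ‖p‖ := norm_pos_iff.2 hp
  obtain ⟨d, hd, hball⟩ := Metric.eventually_nhds_iff.1 (hcont.eventually hev)
  refine ⟨k, m * (‖p‖ * sig) ^ k, by positivity, min d (1 / 4), by positivity,
    lt_of_le_of_lt (min_le_right _ _) (by norm_num), fun u hu => ?_⟩
  have hu0 := hu.1
  have hud : u < d := hu.2.trans_le (min_le_left _ _)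
  have hu4 : u < 1 / 4 := hu.2.trans_le (min_le_right _ _)
  have h := hball (y := u) (by simpa [abs_of_pos hu0] using hud)
  refine le_trans ?_ h
  rw [mul_assoc, ← mul_pow]
  have hlow : sig * u ≤ (1 - u) ^ (-sig) - 1 := by
    rw [Real.rpow_def_of_pos (by linarith)]
    have h1 := Real.add_one_le_exp (Real.log (1 - u) * -sig)
    have h2 := Real.log_le_sub_one_of_pos (show 0 < 1 - u by linarith)
    nlinarith
  have e1 : -p * (((1 - u) ^ (-sig) : ℝ) : ℂ) - -p = -p * ((((1 - u) ^ (-sig) - 1) : ℝ) : ℂ) := by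
    push_cast; ring
  have hnn : 0 ≤ (1 - u) ^ (-sig) - 1 := le_trans (by positivity) hlow
  rw [e1, norm_mul, norm_neg, Complex.norm_real, Real.norm_of_nonneg hnn, mul_assoc]
  gcongr

lemma mlE_q_integrable (lam sig tau : ℝ) (hlam : 0 < lam) (hsig : 0 < sig)
    (p q e1 e2 : ℂ) (hp : p ≠ 0)
    (hint : IntegrableOn (fun t : ℝ =>
        (t : ℂ) ^ (e1 - 1) * (1 - (t : ℂ)) ^ (-e2) *
          mlE lam (-p / (t : ℂ) ^ (sig : ℂ)) * mlE lam (-q / (1 - (t : ℂ)) ^ (tau : ℂ)))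
      (Ioo (0:ℝ) 1)) :
    ∃ M : ℕ, ∃ u0 : ℝ, 0 < u0 ∧ u0 < 1 ∧
      IntegrableOn (fun u : ℝ => u ^ M * ‖mlE lam (-q * ((u ^ (-tau) : ℝ) : ℂ))‖) (Ioo 0 u0) := by
  obtain ⟨k, m, hm, u0, hu0, hu1, hlow⟩ := mlE_lower_t lam sig hlam hsig p hp
  obtain ⟨j, hj⟩ := exists_nat_ge |e2.re|
  refine ⟨j + k, u0, hu0, by linarith, ?_⟩
  have h1 : IntegrableOn (fun u : ℝ => ((1 - u : ℝ) : ℂ) ^ (e1 - 1) * (u : ℂ) ^ (-e2) *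
          mlE lam (-p / ((1 - u : ℝ) : ℂ) ^ (sig : ℂ)) * mlE lam (-q / (u : ℂ) ^ (tau : ℂ)))
      (Ioo (0:ℝ) u0) := by
    have h2 := ((integrable_indicator_iff measurableSet_Ioo).2 hint).comp_sub_left 1
    refine ((h2.integrableOn (s := Ioo 0 u0)).congr_fun (fun u hu => ?_) measurableSet_Ioo)
    have hu' : 1 - u ∈ Ioo (0:ℝ) 1 := ⟨by linarith [hu.2], by linarith [hu.1]⟩
    simp only [indicator_of_mem hu']
    have : (1:ℂ) - ((1 - u : ℝ) : ℂ) = u := by push_cast; ring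
    rw [this]
  have hc : 0 < (1 / 2 : ℝ) ^ |e1.re - 1| := by positivity
  refine Integrable.mono' (g := fun u => ((1 / 2 : ℝ) ^ |e1.re - 1| * m)⁻¹ *
    ‖((1 - u : ℝ) : ℂ) ^ (e1 - 1) * (u : ℂ) ^ (-e2) *
          mlE lam (-p / ((1 - u : ℝ) : ℂ) ^ (sig : ℂ)) * mlE lam (-q / (u : ℂ) ^ (tau : ℂ))‖)
    (h1.norm.const_mul _) ?_ ?_
  · refine ContinuousOn.aestronglyMeasurable ?_ measurableSet_Ioo
    refine (by fun_prop : Continuous fun u : ℝ => u ^ (j + k)).continuousOn.mul (ContinuousOn.norm ?_)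
    refine (mlE_differentiable lam hlam).continuous.comp_continuousOn ?_
    refine continuousOn_const.mul (Complex.continuous_ofReal.comp_continuousOn ?_)
    exact continuousOn_id.rpow_const fun u hu => Or.inl hu.1.ne'
  · filter_upwards [ae_restrict_mem measurableSet_Ioo] with u hu
    have hu1' : 0 < 1 - u := by linarith [hu.2]
    rw [arg_eq _ _ _ hu.1, arg_eq _ _ _ hu1', norm_mul, norm_mul, norm_mul,
      norm_mul (((1 - u : ℝ) : ℂ) ^ (e1 - 1)), Complex.norm_cpow_eq_rpow_re_of_pos hu1', Complex.norm_cpow_eq_rpow_re_of_pos hu.1,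
      Real.norm_of_nonneg (pow_nonneg hu.1.le _), norm_norm, ← div_eq_inv_mul,
      le_div_iff₀ (by positivity)]
    have hl := hlow u hu
    have ha : (1 / 2 : ℝ) ^ |e1.re - 1| ≤ (1 - u) ^ (e1 - 1).re := by
      calc (1 / 2 : ℝ) ^ |e1.re - 1| ≤ (1 - u) ^ |e1.re - 1| :=
            Real.rpow_le_rpow (by norm_num) (by linarith [hu.2]) (abs_nonneg _)
        _ ≤ _ := Real.rpow_le_rpow_of_exponent_ge hu1' (by linarith [hu.1])
            (by simpa using le_abs_self (e1.re - 1))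
    have hb : u ^ j ≤ u ^ (-e2).re := by
      rw [← Real.rpow_natCast]
      exact Real.rpow_le_rpow_of_exponent_ge hu.1 (by linarith [hu.2])
        (by simpa using (neg_le_abs e2.re).trans hj)
    have hu0' := hu.1
    calc u ^ (j + k) * ‖mlE lam (-q * ((u ^ (-tau) : ℝ) : ℂ))‖ * ((1 / 2 : ℝ) ^ |e1.re - 1| * m)
        = (1 / 2 : ℝ) ^ |e1.re - 1| * u ^ j * (m * u ^ k) *
          ‖mlE lam (-q * ((u ^ (-tau) : ℝ) : ℂ))‖ := by rw [pow_add]; ring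
      _ ≤ _ := by gcongr

lemma mlE_q_growth (lam tau : ℝ) (hlam : 0 < lam) (htau : 0 < tau) (q : ℂ) (hq : q ≠ 0)
    (M : ℕ) (u0 : ℝ) (hu0 : 0 < u0) (hu1 : u0 < 1)
    (hM : IntegrableOn (fun u : ℝ => u ^ M * ‖mlE lam (-q * ((u ^ (-tau) : ℝ) : ℂ))‖) (Ioo 0 u0))
    (kap : ℝ) (hkap : 0 < kap) :
    ∃ C : ℝ, ∀ u : ℝ, 0 < u → u < 1 →
      ‖mlE lam (-q * ((u ^ (-tau) : ℝ) : ℂ))‖ ≤ C * u ^ (-kap) := by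
  set P : ℝ := -(lam / tau) with hP
  have hPneg : P < 0 := by rw [hP]; simp; positivity
  have h1 : IntegrableOn ((Ioo 0 u0).indicator
      (fun u : ℝ => u ^ M * ‖mlE lam (-q * ((u ^ (-tau) : ℝ) : ℂ))‖)) (Ioi 0) :=
    ((integrable_indicator_iff measurableSet_Ioo).2 hM).integrableOn
  have h2 := (integrableOn_Ioi_comp_rpow_iff _ hPneg.ne).2 h1
  set T0 : ℝ := u0 ^ (1 / P) with hT0
  have hT0pos : 0 < T0 := Real.rpow_pos_of_pos hu0 _
  have hT01 : 1 ≤ T0 := Real.one_le_rpow_of_pos_of_le_one_of_nonpos hu0 hu1.le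
    (one_div_nonpos.2 hPneg.le)
  obtain ⟨N, hN⟩ := exists_nat_ge (1 - P - P * M)
  have h3 : IntegrableOn (fun t : ℝ => ‖mlF lam q t‖ / t ^ N) (Ioi T0) := by
    have h4 := (h2.mono_set (Ioi_subset_Ioi hT0pos.le)).const_mul (|P|⁻¹)
    refine Integrable.mono' h4 ?_ ?_
    · refine ContinuousOn.aestronglyMeasurable ?_ measurableSet_Ioi
      refine (mlF_continuous lam hlam q).norm.continuousOn.div
        (by fun_prop) fun t ht => ?_
      exact pow_ne_zero _ (hT0pos.trans ht).ne'
    · filter_upwards [ae_restrict_mem measurableSet_Ioi] with x hx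
      have hx0 : 0 < x := hT0pos.trans hx
      have hx1 : 1 ≤ x := hT01.trans (le_of_lt hx)
      have hxP : x ^ P ∈ Ioo 0 u0 := by
        refine ⟨Real.rpow_pos_of_pos hx0 _, ?_⟩
        calc x ^ P < T0 ^ P := Real.rpow_lt_rpow_of_neg hT0pos hx hPneg
          _ = u0 := by
            rw [hT0, ← Real.rpow_mul hu0.le, one_div_mul_cancel hPneg.ne, Real.rpow_one]
      have e1 : (x ^ P) ^ (-tau) = x ^ lam := by
        rw [← Real.rpow_mul hx0.le]; congr 1; rw [hP]; field_simp
      rw [indicator_of_mem hxP, e1, Real.norm_of_nonneg (by positivity), smul_eq_mul]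
      have e2 : |P|⁻¹ * (|P| * x ^ (P - 1) * ((x ^ P) ^ M * ‖mlE lam (-q * ((x ^ lam : ℝ) : ℂ))‖))
          = x ^ (P - 1 + P * M) * ‖mlF lam q x‖ := by
        have : |P| ≠ 0 := abs_ne_zero.2 hPneg.ne
        rw [Real.rpow_add hx0, Real.rpow_mul hx0.le, Real.rpow_natCast, mlF]
        field_simp
      rw [e2, div_eq_inv_mul, ← Real.rpow_natCast, ← Real.rpow_neg hx0.le]
      gcongr
      linarith
  obtain ⟨C, hC⟩ := growth lam hlam q hq T0 hT0pos N h3 (kap * lam / tau) (by positivity)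
  refine ⟨C, fun u hu hu' => ?_⟩
  have h5 := hC (u ^ (1 / P)) (Real.one_le_rpow_of_pos_of_le_one_of_nonpos hu hu'.le
    (one_div_nonpos.2 hPneg.le))
  rw [mlF, ← Real.rpow_mul hu.le, ← Real.rpow_mul hu.le] at h5
  have e3 : 1 / P * lam = -tau := by rw [hP]; field_simp
  have e4 : 1 / P * (kap * lam / tau) = -kap := by rw [hP]; field_simp
  rwa [e3, e4] at h5


lemma cont_Ioo_aux (lam sig : ℝ) (hlam : 0 < lam) (p e : ℂ) :
    ContinuousOn (fun t : ℝ => (t:ℂ) ^ (e - 1) * mlE lam (-p / (t:ℂ) ^ (sig:ℂ))) (Ioi 0) := by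
  have hc : ∀ a : ℂ, ContinuousOn (fun t : ℝ => (t:ℂ) ^ a) (Ioi 0) := fun a =>
    ContinuousOn.cpow_const Complex.continuous_ofReal.continuousOn
      (fun t ht => Or.inl (by simpa using ht))
  refine (hc _).mul ((mlE_differentiable lam hlam).continuous.comp_continuousOn ?_)
  refine continuousOn_const.div (hc _) fun t ht => ?_
  have : (t:ℂ) ≠ 0 := by exact_mod_cast (ne_of_gt ht)
  simp [Complex.cpow_eq_zero_iff, this]

lemma cont_G (lam sig tau : ℝ) (hlam : 0 < lam) (p q e1 : ℂ) :
    ContinuousOn (fun t : ℝ => (t : ℂ) ^ (e1 - 1) * mlE lam (-p / (t : ℂ) ^ (sig : ℂ)) *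
      mlE lam (-q / (1 - (t : ℂ)) ^ (tau : ℂ))) (Ioo 0 1) := by
  refine ((cont_Ioo_aux lam sig hlam p e1).mono fun t ht => ht.1).mul ?_
  have h := (cont_Ioo_aux lam tau hlam q 1).comp (s := Ioo 0 1) (f := fun t : ℝ => 1 - t)
    (by fun_prop) (fun t ht => by simpa using ht.2)
  refine h.congr fun t _ => ?_
  simp

lemma integrable_neg_case (lam sig tau : ℝ) (hlam : 0 < lam) (hsig : 0 < sig)
    (htau : 0 < tau) (p q e1 e2 : ℂ) (hp : p ≠ 0) (hq : q ≠ 0)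
    (hint : IntegrableOn (fun t : ℝ =>
        (t : ℂ) ^ (e1 - 1) * (1 - (t : ℂ)) ^ (-e2) *
          mlE lam (-p / (t : ℂ) ^ (sig : ℂ)) * mlE lam (-q / (1 - (t : ℂ)) ^ (tau : ℂ)))
      (Ioo (0:ℝ) 1)) :
    IntegrableOn (fun t : ℝ => (1 - t) ^ (-(1 / 4) : ℝ) *
      ‖(t : ℂ) ^ (e1 - 1) * mlE lam (-p / (t : ℂ) ^ (sig : ℂ)) *
        mlE lam (-q / (1 - (t : ℂ)) ^ (tau : ℂ))‖) (Ioo (0:ℝ) 1) := by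
  have hcontT : ContinuousOn (fun t : ℝ => (1 - t) ^ (-(1 / 4) : ℝ) *
      ‖(t : ℂ) ^ (e1 - 1) * mlE lam (-p / (t : ℂ) ^ (sig : ℂ)) *
        mlE lam (-q / (1 - (t : ℂ)) ^ (tau : ℂ))‖) (Ioo (0:ℝ) 1) := by
    refine ContinuousOn.mul ?_ (cont_G lam sig tau hlam p q e1).norm
    exact ContinuousOn.rpow_const (by fun_prop) fun t ht => Or.inl (by linarith [ht.2])
  obtain ⟨M, u0, hu0, hu1, hM⟩ := mlE_q_integrable lam sig tau hlam hsig p q e1 e2 hp hint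
  obtain ⟨C, hC⟩ := mlE_q_growth lam tau hlam htau q hq M u0 hu0 hu1 hM (1 / 4) (by norm_num)
  have hsub1 : Ioc (0:ℝ) (1 / 2) ⊆ Ioo 0 1 := fun t ht => ⟨ht.1, by linarith [ht.2]⟩
  have hsub2 : Ioo (1 / 2 : ℝ) 1 ⊆ Ioo 0 1 := fun t ht => ⟨by linarith [ht.1], ht.2⟩
  rw [← Ioc_union_Ioo_eq_Ioo (show (0:ℝ) ≤ 1 / 2 by norm_num) (show (1 / 2 : ℝ) < 1 by norm_num)]
  refine IntegrableOn.union ?_ ?_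
  · have h1 := ((hint.mono_set hsub1).norm).const_mul
      ((1 / 2 : ℝ) ^ (-(1 / 4) : ℝ) / (1 / 2 : ℝ) ^ |e2.re|)
    refine Integrable.mono' h1
      ((hcontT.mono hsub1).aestronglyMeasurable measurableSet_Ioc) ?_
    filter_upwards [ae_restrict_mem measurableSet_Ioc] with t ht
    have h1t : 0 < 1 - t := by linarith [ht.2]
    have hc1 : (1 - (t:ℂ)) = ((1 - t : ℝ) : ℂ) := by push_cast; rfl
    have hb : (1 / 2 : ℝ) ^ |e2.re| ≤ (1 - t) ^ (-e2).re := by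
      calc (1 / 2 : ℝ) ^ |e2.re| ≤ (1 - t) ^ |e2.re| :=
            Real.rpow_le_rpow (by norm_num) (by linarith [ht.2]) (abs_nonneg _)
        _ ≤ _ := Real.rpow_le_rpow_of_exponent_ge h1t (by linarith [ht.1])
            (by simpa using neg_le_abs e2.re)
    have ha : (1 - t) ^ (-(1 / 4) : ℝ) ≤ (1 / 2 : ℝ) ^ (-(1 / 4) : ℝ) :=
      Real.rpow_le_rpow_of_nonpos (by norm_num) (by linarith [ht.2]) (by norm_num)
    have hcp : 0 < (1 / 2 : ℝ) ^ |e2.re| := by positivity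
    rw [norm_mul, norm_norm, Real.norm_of_nonneg (by positivity)]
    have e1 : ‖(t : ℂ) ^ (e1 - 1) * (1 - (t : ℂ)) ^ (-e2) *
          mlE lam (-p / (t : ℂ) ^ (sig : ℂ)) * mlE lam (-q / (1 - (t : ℂ)) ^ (tau : ℂ))‖
        = (1 - t) ^ (-e2).re * ‖(t : ℂ) ^ (e1 - 1) * mlE lam (-p / (t : ℂ) ^ (sig : ℂ)) *
        mlE lam (-q / (1 - (t : ℂ)) ^ (tau : ℂ))‖ := by
      rw [← Complex.norm_cpow_eq_rpow_re_of_pos h1t, ← hc1, ← norm_mul]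
      congr 1; ring
    rw [e1, ← mul_assoc]
    refine mul_le_mul_of_nonneg_right ?_ (norm_nonneg _)
    refine ha.trans ?_
    rw [div_mul_eq_mul_div, le_div_iff₀ hcp]
    gcongr
  · obtain ⟨K, hK⟩ := (isCompact_Icc (a := (1 / 2 : ℝ)) (b := 1)).exists_bound_of_continuousOn
      ((cont_Ioo_aux lam sig hlam p e1).mono fun t ht => by
        have := ht.1; simp only [mem_Ioi]; linarith)
    have h0 : IntegrableOn (fun u : ℝ => u ^ (-(1 / 2) : ℝ)) (Ioo 0 1) :=
      (intervalIntegral.integrableOn_Ioo_rpow_iff one_pos).2 (by norm_num)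
    have h1 : IntegrableOn (fun t : ℝ => (1 - t) ^ (-(1 / 2) : ℝ)) (Ioo (1 / 2) 1) := by
      have h2 := ((integrable_indicator_iff measurableSet_Ioo).2 h0).comp_sub_left 1
      refine ((h2.integrableOn (s := Ioo (1 / 2) 1)).congr_fun (fun u hu => ?_) measurableSet_Ioo)
      have hu' : 1 - u ∈ Ioo (0:ℝ) 1 := ⟨by linarith [hu.2], by linarith [hu.1]⟩
      simp only [indicator_of_mem hu']
    refine Integrable.mono' (h1.const_mul (K * C))
      ((hcontT.mono hsub2).aestronglyMeasurable measurableSet_Ioo) ?_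
    filter_upwards [ae_restrict_mem measurableSet_Ioo] with t ht
    have h1t : 0 < 1 - t := by linarith [ht.2]
    have hc1 : (1 - (t:ℂ)) = ((1 - t : ℝ) : ℂ) := by push_cast; rfl
    have hk := hK t ⟨ht.1.le, ht.2.le⟩
    have hc := hC (1 - t) h1t (by linarith [ht.1])
    rw [norm_mul, norm_norm, Real.norm_of_nonneg (by positivity), norm_mul, hc1, arg_eq q _ _ h1t]
    have e2 : (1 - t) ^ (-(1 / 2) : ℝ) = (1 - t) ^ (-(1 / 4) : ℝ) * (1 - t) ^ (-(1 / 4) : ℝ) := by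
      rw [← Real.rpow_add h1t]; norm_num
    have hK0 : 0 ≤ K := (norm_nonneg _).trans hk
    calc _ ≤ (1 - t) ^ (-(1 / 4) : ℝ) * (K * (C * (1 - t) ^ (-(1 / 4) : ℝ))) := by
          gcongr
      _ = _ := by rw [e2]; ring

theorem extBeta_summation_formula (lam sig tau : ℝ) (hlam : 0 < lam) (hsig : 0 < sig)
    (htau : 0 < tau) (p q e1 e2 : ℂ) (hp : 0 < p.re) (hq : 0 < q.re) (he1 : 0 < e1.re)
    (hint : IntegrableOn (fun t : ℝ =>
        (t : ℂ) ^ (e1 - 1) * (1 - (t : ℂ)) ^ (-e2) *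
          mlE lam (-p / (t : ℂ) ^ (sig : ℂ)) * mlE lam (-q / (1 - (t : ℂ)) ^ (tau : ℂ)))
      (Ioo (0:ℝ) 1)) :
    extBeta lam sig tau p q e1 (1 - e2)
      = ∑' n : ℕ, (ascPochhammer ℂ n).eval e2 / (Nat.factorial n : ℂ) *
          extBeta lam sig tau p q (e1 + n) 1 := by
  have hp0 : p ≠ 0 := by rintro rfl; simp at hp
  have hq0 : q ≠ 0 := by rintro rfl; simp at hq
  set g : ℝ → ℂ := fun t => (t : ℂ) ^ (e1 - 1) * mlE lam (-p / (t : ℂ) ^ (sig : ℂ)) *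
      mlE lam (-q / (1 - (t : ℂ)) ^ (tau : ℂ)) with hg
  have hgm : AEStronglyMeasurable g (volume.restrict (Ioo (0:ℝ) 1)) :=
    (cont_G lam sig tau hlam p q e1).aestronglyMeasurable measurableSet_Ioo
  have hex : ∃ r : ℝ, 0 < r ∧ e2.re ≤ r ∧
      IntegrableOn (fun t : ℝ => (1 - t) ^ (-r) * ‖g t‖) (Ioo (0:ℝ) 1) := by
    by_cases he : 0 < e2.re
    · refine ⟨e2.re, he, le_rfl, ?_⟩
      refine IntegrableOn.congr_fun hint.norm (fun t ht => ?_) measurableSet_Ioo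
      have h1t : 0 < 1 - t := by linarith [ht.2]
      have hc1 : (1 - (t:ℂ)) = ((1 - t : ℝ) : ℂ) := by push_cast; rfl
      have h2 := Complex.norm_cpow_eq_rpow_re_of_pos h1t (-e2)
      rw [← hc1, neg_re] at h2
      rw [← h2, ← norm_mul, hg]
      congr 1; ring
    · exact ⟨1 / 4, by norm_num, by linarith,
        integrable_neg_case lam sig tau hlam hsig htau p q e1 e2 hp0 hq0 hint⟩
  obtain ⟨r, hr, hre, hI⟩ := hex
  have hs := sum_swap g e2 r hr hre hgm hI
  have hL : extBeta lam sig tau p q e1 (1 - e2)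
      = ∫ t in Ioo (0:ℝ) 1, (1 - (t:ℂ)) ^ (-e2) * g t := by
    unfold extBeta
    refine setIntegral_congr_fun measurableSet_Ioo fun t _ => ?_
    simp only [hg]
    rw [show (1 - e2 - 1) = -e2 by ring]
    ring
  have hR : ∀ n : ℕ, extBeta lam sig tau p q (e1 + n) 1
      = ∫ t in Ioo (0:ℝ) 1, (t:ℂ) ^ n * g t := by
    intro n
    unfold extBeta
    refine setIntegral_congr_fun measurableSet_Ioo fun t ht => ?_
    have ht0 : (t:ℂ) ≠ 0 := by exact_mod_cast ht.1.ne'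
    simp only [hg]
    rw [show e1 + n - 1 = (e1 - 1) + n by ring, Complex.cpow_add _ _ ht0, Complex.cpow_natCast,
      sub_self, Complex.cpow_zero]
    ring
  rw [hL, ← hs.tsum_eq]
  simp only [hR]
end
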